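/- arXiv:1004.4093 — 4 statements merged into one kernel-verified Lean document; each statement's English description precedes it below -/
import Mathlib

section
/- Let φ : ℝ → ℝ be a C^∞ function such that φ = 1 on [−1/2, 1/2] and φ = 0 outside [−1, 1]. Define τ₄ : ℝ × (−1/2, 1/2) → ℝ by τ₄(x₁,x₂) = Σ_{k=1}^{∞} (1 − φ(k·x₁)) · Σ_{i=0}^{∞} (k!/(k+i)!) · x₂^{k+i+1} / x₁^{i+1} for x₁ ≠ 0, and τ₄(0, x₂) = 0. Then the double series converges for every x₁ ≠ 0 and |x₂| < 1/2, and τ₄ is C^∞ on ℝ × (−1/2, 1/2). -/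
open scoped Nat

noncomputable section

/-- The summand of index `k+1` (so `k+1` runs over `1, 2, …`) of the outer series
defining `τ₄`. -/
def tauTerm (phi : ℝ → ℝ) (k : ℕ) (x : ℝ × ℝ) : ℝ :=
  (1 - phi (((k : ℝ) + 1) * x.1)) *
    ∑' i : ℕ, (((k + 1)! : ℝ) / ((k + 1 + i)! : ℝ)) * x.2 ^ (k + 1 + i + 1) / x.1 ^ (i + 1)

/-- `τ₄(x₁,x₂) = Σ_{k=1}^∞ (1 − phi(k x₁)) Σ_{i=0}^∞ (k!/(k+i)!) x₂^{k+i+1}/x₁^{i+1}` for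
`x₁ ≠ 0`, and `τ₄(0,x₂) = 0`. -/
def tau4 (phi : ℝ → ℝ) (x : ℝ × ℝ) : ℝ :=
  if x.1 = 0 then 0 else ∑' k : ℕ, tauTerm phi k x

/-!
Suppose `φ = 1` on `(-δ, δ)` and expand `τ₄` as one double series indexed by `(k, i)`. Where the
`(k, i)` term does not vanish, `|x₁|⁻¹ ≤ k / δ`, and since `k! kⁱ ≤ (k + i)!` the term is at most a
constant times `k ^ s * |x₂| ^ k * (|x₂| / δ) ^ i` for some `s`, which is summable over `(k, i)` as
soon as `|x₂| < δ ≤ 1`. Differentiating a term replaces the cutoff `1 - φ` by its derivative, raises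
the power of `x₁⁻¹` or lowers the power of `x₂`, at the cost of a factor polynomial in `k` and `i`.
The series of this shape, with coefficients of polynomial growth, are therefore closed under
termwise differentiation.
-/

open Set Metric Asymptotics Filter Topology
open scoped ContDiff

section Bounds

lemma factorial_div_factorial_add_mul_pow_le_one (k i : ℕ) :
    (k ! : ℝ) / (k + i)! * (k : ℝ) ^ i ≤ 1 := by
  rw [div_mul_eq_mul_div, div_le_one (by positivity)]
  calc (k ! : ℝ) * (k : ℝ) ^ i ≤ k ! * ((k : ℝ) + 1) ^ i := by gcongr; linarith
    _ ≤ (k + i)! := by exact_mod_cast Nat.factorial_mul_pow_le_factorial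

lemma summable_factorial_div_factorial_add_mul_pow_div_pow (k : ℕ) (x y : ℝ) :
    Summable fun i : ℕ ↦ (k ! : ℝ) / (k + i)! * y ^ (k + i + 1) / x ^ (i + 1) := by
  have exp_series := (Real.summable_pow_div_factorial (|y| / |x|)).mul_left
    ((k ! : ℝ) * |y| ^ (k + 1) / |x|)
  refine .of_norm_bounded exp_series fun i ↦ ?_
  have factorial_le : (i ! : ℝ) ≤ (k + i)! := by
    exact_mod_cast Nat.factorial_le (Nat.le_add_left i k)
  calc ‖(k ! : ℝ) / (k + i)! * y ^ (k + i + 1) / x ^ (i + 1)‖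
      = (k ! : ℝ) / (k + i)! * |y| ^ (k + i + 1) / |x| ^ (i + 1) := by simp
    _ ≤ (k ! : ℝ) / i ! * |y| ^ (k + i + 1) / |x| ^ (i + 1) := by gcongr
    _ = (k ! : ℝ) * |y| ^ (k + 1) / |x| * ((|y| / |x|) ^ i / i !) := by
      rw [div_pow]; ring

lemma abs_pow_sub_le {y ρ : ℝ} (hρ : 0 < ρ) (hρ1 : ρ ≤ 1) (hy : |y| ≤ ρ) (n m : ℕ) :
    |y ^ (n - m)| ≤ ρ⁻¹ ^ m * ρ ^ n := by
  calc |y ^ (n - m)| ≤ ρ ^ (n - m) := by rw [abs_pow]; gcongr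
    _ = ρ⁻¹ ^ m * ρ ^ (m + (n - m)) := by rw [pow_add, inv_pow]; field_simp
    _ ≤ ρ⁻¹ ^ m * ρ ^ n :=
      mul_le_mul_of_nonneg_left (pow_le_pow_of_le_one hρ.le hρ1 (by omega)) (by positivity)

lemma summable_add_one_pow_mul_geometric {ρ : ℝ} (hρ : 0 ≤ ρ) (hρ1 : ρ < 1) (s : ℕ) :
    Summable fun n : ℕ ↦ ((n : ℝ) + 1) ^ s * ρ ^ (n + 1) := by
  have summable_pow_mul : Summable fun n : ℕ ↦ (n : ℝ) ^ s * ρ ^ n :=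
    summable_pow_mul_geometric_of_norm_lt_one s (by rwa [Real.norm_of_nonneg hρ])
  simpa only [Nat.cast_add_one] using (summable_nat_add_iff 1).2 summable_pow_mul

end Bounds

section PolynomialGrowth

/-- A double sequence has polynomial growth if it is bounded by a constant multiple of a power of
`(k + 1) * (i + 1)`, the bound `O[⊤]` holding at every index `(k, i)`. -/
def HasPolynomialGrowth (a : ℕ × ℕ → ℝ) : Prop :=
  ∃ r : ℕ, a =O[⊤] fun p ↦ (((p.1 : ℝ) + 1) * (p.2 + 1)) ^ r

lemma hasPolynomialGrowth_of_abs_le {a : ℕ × ℕ → ℝ} (C : ℝ)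
    (ha : ∀ p, |a p| ≤ C * (((p.1 : ℝ) + 1) * (p.2 + 1))) : HasPolynomialGrowth a := by
  refine ⟨1, .of_bound C (.of_forall fun p ↦ ?_)⟩
  rw [pow_one, Real.norm_eq_abs, Real.norm_of_nonneg (by positivity)]
  exact ha p

namespace HasPolynomialGrowth

variable {a b : ℕ × ℕ → ℝ}

lemma mul (ha : HasPolynomialGrowth a) (hb : HasPolynomialGrowth b) :
    HasPolynomialGrowth fun p ↦ a p * b p := by
  obtain ⟨r, ha⟩ := ha
  obtain ⟨s, hb⟩ := hb
  exact ⟨r + s, by simpa only [pow_add] using ha.mul hb⟩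

lemma exists_abs_le (ha : HasPolynomialGrowth a) :
    ∃ A ≥ 0, ∃ r : ℕ, ∀ p, |a p| ≤ A * (((p.1 : ℝ) + 1) * (p.2 + 1)) ^ r := by
  obtain ⟨r, ha⟩ := ha
  obtain ⟨A, A_nonneg, hA⟩ := ha.exists_nonneg
  refine ⟨A, A_nonneg, r, fun p ↦ (isBigOWith_top.1 hA p).trans_eq ?_⟩
  rw [Real.norm_of_nonneg (by positivity)]

lemma one : HasPolynomialGrowth 1 :=
  hasPolynomialGrowth_of_abs_le 1 fun p ↦ by
    have : (0 : ℝ) ≤ p.1 * p.2 + p.1 + p.2 := by positivity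
    simp only [Pi.one_apply, abs_one]
    linarith

lemma fst_add_one : HasPolynomialGrowth fun p ↦ (p.1 : ℝ) + 1 :=
  hasPolynomialGrowth_of_abs_le 1 fun p ↦ by
    have : (0 : ℝ) ≤ p.2 * (p.1 + 1) := by positivity
    rw [abs_of_nonneg (by positivity)]
    linarith

lemma snd_add_one_add (l : ℕ) : HasPolynomialGrowth fun p ↦ ((p.2 + 1 + l : ℕ) : ℝ) :=
  hasPolynomialGrowth_of_abs_le (l + 1) fun p ↦ by
    have : (0 : ℝ) ≤ p.2 * l + (l + 1) * (p.1 * (p.2 + 1)) := by positivity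
    rw [Nat.abs_cast]
    push_cast
    linarith

lemma fst_add_snd_sub (m : ℕ) :
    HasPolynomialGrowth fun p ↦ ((p.1 + 1 + p.2 + 1 - m : ℕ) : ℝ) :=
  hasPolynomialGrowth_of_abs_le 2 fun p ↦ by
    have sub_le : ((p.1 + 1 + p.2 + 1 - m : ℕ) : ℝ) ≤ (p.1 + 1 + p.2 + 1 : ℕ) := by
      exact_mod_cast Nat.sub_le _ _
    have : (0 : ℝ) ≤ 2 * (p.1 * p.2) + p.1 + p.2 := by positivity
    rw [Nat.abs_cast]
    push_cast at sub_le
    linarith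

end HasPolynomialGrowth

end PolynomialGrowth

section Cutoff

variable {δ : ℝ} {χ : ℝ → ℝ}

/-- A cutoff of radius `δ`: a smooth function all of whose derivatives grow at most polynomially,
vanishing on `(-δ, δ)`. It plays the part of `1 - φ` and of the derivatives of `φ`. -/
structure IsCutoff (δ : ℝ) (χ : ℝ → ℝ) : Prop where
  hasTemperateGrowth : χ.HasTemperateGrowth
  eqOn_zero : EqOn χ 0 (ball 0 δ)

lemma hasTemperateGrowth_deriv (hχ : χ.HasTemperateGrowth) : (deriv χ).HasTemperateGrowth := by
  refine ⟨(contDiff_infty_iff_deriv.1 hχ.1).2, fun n ↦ ?_⟩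
  obtain ⟨s, C, hC⟩ := hχ.2 (n + 1)
  refine ⟨s, C, fun t ↦ ?_⟩
  simpa only [norm_iteratedFDeriv_eq_norm_iteratedDeriv, iteratedDeriv_succ'] using hC t

lemma hasDerivAt_comp_mul_div_pow (hχ : Differentiable ℝ χ) (hχ0 : χ =ᶠ[𝓝 0] 0) (K : ℝ) (j : ℕ)
    (t : ℝ) :
    HasDerivAt (fun t ↦ χ (K * t) / t ^ j)
      (K * deriv χ (K * t) / t ^ j - j * χ (K * t) / t ^ (j + 1)) t := by
  rcases eq_or_ne t 0 with rfl | ht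
  · have tendsto_mul : Tendsto (K * ·) (𝓝 0) (𝓝 0) := by
      simpa using (continuous_const_mul K).tendsto 0
    have eventually_zero : (fun t ↦ χ (K * t) / t ^ j) =ᶠ[𝓝 0] fun _ ↦ 0 := by
      filter_upwards [tendsto_mul.eventually hχ0] with t ht
      rw [ht, Pi.zero_apply, zero_div]
    have deriv_zero : deriv χ 0 = 0 := by simpa using hχ0.deriv_eq
    refine ((hasDerivAt_const 0 0).congr_of_eventuallyEq eventually_zero).congr_deriv ?_
    simp [deriv_zero, hχ0.eq_of_nhds]
  · have numerator : HasDerivAt (fun t ↦ χ (K * t)) (deriv χ (K * t) * (K * 1)) t :=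
      (hχ (K * t)).hasDerivAt.comp t ((hasDerivAt_id t).const_mul K)
    refine (numerator.div (hasDerivAt_pow j t) (pow_ne_zero j ht)).congr_deriv ?_
    rcases j with _ | j
    · simp [mul_comm]
    · rw [Nat.add_sub_cancel]
      field_simp
      ring

namespace IsCutoff

lemma deriv (hχ : IsCutoff δ χ) : IsCutoff δ (deriv χ) where
  hasTemperateGrowth := hasTemperateGrowth_deriv hχ.hasTemperateGrowth
  eqOn_zero t ht := by simpa using hχ.eqOn_zero.deriv isOpen_ball ht

lemma le_abs_of_ne_zero (hχ : IsCutoff δ χ) {t : ℝ} (ht : χ t ≠ 0) : δ ≤ |t| := by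
  contrapose! ht
  exact hχ.eqOn_zero (by rwa [mem_ball_zero_iff])

lemma exists_abs_le (hχ : IsCutoff δ χ) : ∃ C ≥ 0, ∃ s : ℕ, ∀ t, |χ t| ≤ C * (1 + |t|) ^ s := by
  obtain ⟨s, C, C_nonneg, hC⟩ := hχ.hasTemperateGrowth.norm_iteratedFDeriv_le_uniform 0
  exact ⟨C, C_nonneg, s, fun t ↦ by simpa using hC 0 le_rfl t⟩

lemma exists_abs_comp_mul_div_pow_le (hχ : IsCutoff δ χ) (hδ : 0 < δ) (R : ℝ) :
    ∃ C ≥ 0, ∃ s : ℕ, ∀ K ≥ 1, ∀ x, |x| ≤ R → ∀ j : ℕ,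
      |χ (K * x) / x ^ j| ≤ C * K ^ s * (K / δ) ^ j := by
  obtain ⟨C, C_nonneg, s, hC⟩ := hχ.exists_abs_le
  refine ⟨C * (1 + |R|) ^ s, by positivity, s, fun K hK x hx j ↦ ?_⟩
  have K_pos : 0 < K := by linarith
  rcases eq_or_ne (χ (K * x)) 0 with hzero | hne
  · rw [hzero, zero_div, abs_zero]
    positivity
  have le_mul_abs : δ ≤ K * |x| := by
    simpa only [abs_mul, abs_of_pos K_pos] using hχ.le_abs_of_ne_zero hne
  have abs_pos : 0 < |x| := pos_of_mul_pos_right (hδ.trans_le le_mul_abs) K_pos.le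
  have inv_abs_le : |x|⁻¹ ≤ K / δ := by
    rwa [inv_le_iff_one_le_mul₀ abs_pos, div_mul_eq_mul_div, one_le_div hδ]
  have one_add_le : 1 + |K * x| ≤ (1 + |R|) * K := by
    rw [abs_mul, abs_of_pos K_pos]
    nlinarith [hx.trans (le_abs_self R)]
  calc |χ (K * x) / x ^ j| = |χ (K * x)| * |x|⁻¹ ^ j := by
        rw [abs_div, abs_pow, inv_pow, div_eq_mul_inv]
    _ ≤ C * ((1 + |R|) * K) ^ s * (K / δ) ^ j := by
        grw [hC, one_add_le, inv_abs_le]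
    _ = C * (1 + |R|) ^ s * K ^ s * (K / δ) ^ j := by rw [mul_pow, ← mul_assoc C]

end IsCutoff

end Cutoff

section CutoffSeries

/-- The `p = (k - 1, i)` term of a double series of the kind obtained by differentiating `τ₄`
termwise: `l` counts the differentiations of the powers of `x₁⁻¹`, and `m` those of the powers of
`x₂`. The truncation of `k + i + 1 - m` at `0` is harmless, because by then the coefficient `a p`
produced by differentiation vanishes. -/
def cutoffTerm (χ : ℝ → ℝ) (a : ℕ × ℕ → ℝ) (l m : ℕ) (p : ℕ × ℕ) (x : ℝ × ℝ) : ℝ :=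
  a p * ((p.1 + 1)! / (p.1 + 1 + p.2)!) *
    (χ ((p.1 + 1) * x.1) / x.1 ^ (p.2 + 1 + l) * x.2 ^ (p.1 + 1 + p.2 + 1 - m))

/-- The sum of the double series of the terms `cutoffTerm χ a l m p`. -/
def cutoffSeries (χ : ℝ → ℝ) (a : ℕ × ℕ → ℝ) (l m : ℕ) (x : ℝ × ℝ) : ℝ :=
  ∑' p, cutoffTerm χ a l m p x

/-- The linear map `(v₁, v₂) ↦ ξ₁ v₁ + ξ₂ v₂`, for differentials given by partial derivatives. -/
def covector (ξ₁ ξ₂ : ℝ) : ℝ × ℝ →L[ℝ] ℝ :=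
  ξ₁ • ContinuousLinearMap.fst ℝ ℝ ℝ + ξ₂ • ContinuousLinearMap.snd ℝ ℝ ℝ

lemma norm_covector_le (ξ₁ ξ₂ : ℝ) : ‖covector ξ₁ ξ₂‖ ≤ |ξ₁| + |ξ₂| := by
  refine (norm_add_le _ _).trans ?_
  rw [norm_smul, norm_smul, Real.norm_eq_abs, Real.norm_eq_abs]
  exact add_le_add
    (mul_le_of_le_one_right (abs_nonneg _) (ContinuousLinearMap.norm_fst_le ℝ ℝ ℝ))
    (mul_le_of_le_one_right (abs_nonneg _) (ContinuousLinearMap.norm_snd_le ℝ ℝ ℝ))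

/-- The partial derivative in `x₁` of `cutoffTerm χ a l m p`. -/
def cutoffTermDerivFst (χ : ℝ → ℝ) (a : ℕ × ℕ → ℝ) (l m : ℕ) (p : ℕ × ℕ) (x : ℝ × ℝ) : ℝ :=
  cutoffTerm (deriv χ) (fun p ↦ a p * (p.1 + 1)) l m p x -
    cutoffTerm χ (fun p ↦ a p * (p.2 + 1 + l : ℕ)) (l + 1) m p x

/-- The partial derivative in `x₂` of `cutoffTerm χ a l m p`. -/
def cutoffTermDerivSnd (χ : ℝ → ℝ) (a : ℕ × ℕ → ℝ) (l m : ℕ) (p : ℕ × ℕ) (x : ℝ × ℝ) : ℝ :=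
  cutoffTerm χ (fun p ↦ a p * (p.1 + 1 + p.2 + 1 - m : ℕ)) l (m + 1) p x

variable {δ ρ : ℝ} {χ : ℝ → ℝ} {a : ℕ × ℕ → ℝ}

lemma hasFDerivAt_cutoffTerm (hχ : Differentiable ℝ χ) (hχ0 : χ =ᶠ[𝓝 0] 0) (l m : ℕ)
    (p : ℕ × ℕ) (x : ℝ × ℝ) :
    HasFDerivAt (cutoffTerm χ a l m p)
      (covector (cutoffTermDerivFst χ a l m p x) (cutoffTermDerivSnd χ a l m p x)) x := by
  have quotient_deriv := (hasDerivAt_comp_mul_div_pow hχ hχ0 (p.1 + 1) (p.2 + 1 + l)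
    x.1).comp_hasFDerivAt x (hasFDerivAt_fst (𝕜 := ℝ))
  have pow_deriv := (hasDerivAt_pow (p.1 + 1 + p.2 + 1 - m) x.2).comp_hasFDerivAt x
    (hasFDerivAt_snd (𝕜 := ℝ))
  refine ((quotient_deriv.mul pow_deriv).const_mul
    (a p * ((p.1 + 1)! / (p.1 + 1 + p.2)!))).congr_fderiv ?_
  refine ContinuousLinearMap.ext fun v ↦ ?_
  simp only [covector, cutoffTermDerivFst, cutoffTermDerivSnd, cutoffTerm, Function.comp_apply,
    add_apply, smul_apply, ContinuousLinearMap.coe_fst', ContinuousLinearMap.coe_snd', smul_eq_mul,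
    Nat.sub_sub]
  ring

lemma exists_abs_cutoffTerm_le (hχ : IsCutoff δ χ) (ha : HasPolynomialGrowth a) (l m : ℕ)
    (hδ : 0 < δ) (hρ : 0 < ρ) (hρ1 : ρ ≤ 1) (R : ℝ) :
    ∃ (B : ℝ) (s r : ℕ), ∀ p, ∀ x ∈ ball (0 : ℝ) R ×ˢ ball (0 : ℝ) ρ,
      |cutoffTerm χ a l m p x| ≤ B * ((((p.1 : ℝ) + 1) ^ s * ρ ^ (p.1 + 1)) *
        (((p.2 : ℝ) + 1) ^ r * (ρ / δ) ^ (p.2 + 1))) := by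
  obtain ⟨C, C_nonneg, s, hC⟩ := hχ.exists_abs_comp_mul_div_pow_le hδ R
  obtain ⟨A, A_nonneg, r, hA⟩ := ha.exists_abs_le
  refine ⟨A * C * δ⁻¹ ^ l * ρ⁻¹ ^ m, r + s + 1 + l, r, ?_⟩
  rintro ⟨k, i⟩ ⟨x, y⟩ ⟨hx, hy⟩
  rw [mem_ball_zero_iff, Real.norm_eq_abs] at hx hy
  have coeff_le : |a (k, i)| ≤ A * (((k : ℝ) + 1) * (i + 1)) ^ r := hA (k, i)
  have cutoff_le := hC (k + 1) (by simp) x hx.le (i + 1 + l)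
  have pow_le := abs_pow_sub_le hρ hρ1 hy.le (k + 1 + i + 1) m
  have factorial_le := factorial_div_factorial_add_mul_pow_le_one (k + 1) i
  rw [Nat.cast_add_one] at factorial_le
  have abs_ratio : |((k + 1)! / (k + 1 + i)! : ℝ)| = (k + 1)! / (k + 1 + i)! :=
    abs_of_nonneg (by positivity)
  simp only [cutoffTerm, abs_mul _ (_ * _), abs_mul (a _), abs_mul (_ / _), abs_ratio]
  set K : ℝ := (k : ℝ) + 1
  set c : ℝ := (k + 1)! / (k + 1 + i)!
  calc |a (k, i)| * c * (|χ (K * x) / x ^ (i + 1 + l)| * |y ^ (k + 1 + i + 1 - m)|)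
      ≤ A * (K * (i + 1)) ^ r * c *
        (C * K ^ s * (K / δ) ^ (i + 1 + l) * (ρ⁻¹ ^ m * ρ ^ (k + 1 + i + 1))) := by gcongr
    _ = c * K ^ i * (A * C * δ⁻¹ ^ l * ρ⁻¹ ^ m *
        ((K ^ (r + s + 1 + l) * ρ ^ (k + 1)) * (((i : ℝ) + 1) ^ r * (ρ / δ) ^ (i + 1)))) := by
      simp only [div_eq_mul_inv, mul_pow, pow_add]; ring
    _ ≤ _ := mul_le_of_le_one_left (by positivity) factorial_le

lemma exists_summable_bound_cutoffTerm (hχ : IsCutoff δ χ) (ha : HasPolynomialGrowth a)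
    (l m : ℕ) (hρ : 0 < ρ) (hρδ : ρ < δ) (hρ1 : ρ < 1) (R : ℝ) :
    ∃ u : ℕ × ℕ → ℝ, Summable u ∧
      ∀ p, ∀ x ∈ ball (0 : ℝ) R ×ˢ ball (0 : ℝ) ρ, |cutoffTerm χ a l m p x| ≤ u p := by
  have δ_pos : 0 < δ := hρ.trans hρδ
  obtain ⟨B, s, r, hB⟩ := exists_abs_cutoffTerm_le hχ ha l m δ_pos hρ hρ1.le R
  refine ⟨_, .mul_left B ?_, hB⟩
  exact (summable_add_one_pow_mul_geometric hρ.le hρ1 s).mul_of_nonneg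
    (summable_add_one_pow_mul_geometric (by positivity) ((div_lt_one δ_pos).2 hρδ) r)
    (fun k ↦ by positivity) (fun i ↦ by positivity)

lemma summable_cutoffTerm (hδ : δ ≤ 1) (hχ : IsCutoff δ χ) (ha : HasPolynomialGrowth a)
    (l m : ℕ) {x : ℝ × ℝ} (hx : |x.2| < δ) : Summable fun p ↦ cutoffTerm χ a l m p x := by
  obtain ⟨ρ, hxρ, hρδ⟩ := exists_between hx
  obtain ⟨u, hu, hbound⟩ := exists_summable_bound_cutoffTerm hχ ha l m
    ((abs_nonneg _).trans_lt hxρ) hρδ (hρδ.trans_le hδ) (|x.1| + 1)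
  exact .of_norm_bounded hu fun p ↦ hbound p x (by simp [hxρ])

lemma exists_summable_bound_fderiv_cutoffTerm (hχ : IsCutoff δ χ) (ha : HasPolynomialGrowth a)
    (l m : ℕ) (hρ : 0 < ρ) (hρδ : ρ < δ) (hρ1 : ρ < 1) (R : ℝ) :
    ∃ u : ℕ × ℕ → ℝ, Summable u ∧ ∀ p, ∀ x ∈ ball (0 : ℝ) R ×ˢ ball (0 : ℝ) ρ,
      ‖covector (cutoffTermDerivFst χ a l m p x) (cutoffTermDerivSnd χ a l m p x)‖ ≤ u p := by
  obtain ⟨u, hu, hub⟩ :=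
    exists_summable_bound_cutoffTerm hχ.deriv (ha.mul .fst_add_one) l m hρ hρδ hρ1 R
  obtain ⟨v, hv, hvb⟩ :=
    exists_summable_bound_cutoffTerm hχ (ha.mul (.snd_add_one_add l)) (l + 1) m hρ hρδ hρ1 R
  obtain ⟨w, hw, hwb⟩ :=
    exists_summable_bound_cutoffTerm hχ (ha.mul (.fst_add_snd_sub m)) l (m + 1) hρ hρδ hρ1 R
  refine ⟨fun p ↦ u p + v p + w p, (hu.add hv).add hw, fun p x hx ↦ ?_⟩
  exact (norm_covector_le _ _).trans <| add_le_add
    ((abs_sub _ _).trans (add_le_add (hub p x hx) (hvb p x hx))) (hwb p x hx)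

lemma hasFDerivAt_cutoffSeries (hδ : δ ≤ 1) (hχ : IsCutoff δ χ) (ha : HasPolynomialGrowth a)
    (l m : ℕ) {x : ℝ × ℝ} (hx : |x.2| < δ) :
    HasFDerivAt (cutoffSeries χ a l m)
      (covector
        (cutoffSeries (deriv χ) (fun p ↦ a p * (p.1 + 1)) l m x -
          cutoffSeries χ (fun p ↦ a p * (p.2 + 1 + l : ℕ)) (l + 1) m x)
        (cutoffSeries χ (fun p ↦ a p * (p.1 + 1 + p.2 + 1 - m : ℕ)) l (m + 1) x)) x := by
  obtain ⟨ρ, hxρ, hρδ⟩ := exists_between hx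
  have ρ_pos : 0 < ρ := (abs_nonneg _).trans_lt hxρ
  obtain ⟨u, hu, hbound⟩ := exists_summable_bound_fderiv_cutoffTerm hχ ha l m ρ_pos hρδ
    (hρδ.trans_le hδ) (|x.1| + 1)
  have x_mem : x ∈ ball (0 : ℝ) (|x.1| + 1) ×ˢ ball (0 : ℝ) ρ := by simp [hxρ]
  have χ_eventually_zero : χ =ᶠ[𝓝 0] 0 :=
    hχ.eqOn_zero.eventuallyEq_of_mem (ball_mem_nhds 0 (ρ_pos.trans hρδ))
  have termwise := hasFDerivAt_tsum_of_isPreconnected hu (isOpen_ball.prod isOpen_ball)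
    ((convex_ball 0 _).prod (convex_ball 0 _)).isPreconnected
    (fun p y _ ↦ hasFDerivAt_cutoffTerm (hχ.hasTemperateGrowth.1.differentiable (by simp))
      χ_eventually_zero l m p y)
    hbound x_mem (summable_cutoffTerm hδ hχ ha l m hx) x_mem
  have sum_deriv := (summable_cutoffTerm hδ hχ.deriv (ha.mul .fst_add_one) l m hx).hasSum
  have sum_fst := (summable_cutoffTerm hδ hχ (ha.mul (.snd_add_one_add l)) (l + 1) m hx).hasSum
  have sum_snd := (summable_cutoffTerm hδ hχ (ha.mul (.fst_add_snd_sub m)) l (m + 1) hx).hasSum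
  exact termwise.congr_fderiv
    (((sum_deriv.sub sum_fst).smul_const _).add (sum_snd.smul_const _)).tsum_eq

lemma contDiffOn_nat_cutoffSeries (hδ : δ ≤ 1) (hχ : IsCutoff δ χ) (ha : HasPolynomialGrowth a)
    (l m n : ℕ) : ContDiffOn ℝ n (cutoffSeries χ a l m) {x | |x.2| < δ} := by
  have strip_open : IsOpen {x : ℝ × ℝ | |x.2| < δ} := isOpen_lt (by fun_prop) continuous_const
  induction n generalizing χ a l m with
  | zero =>
    rw [Nat.cast_zero, contDiffOn_zero]
    exact fun x hx ↦
      (hasFDerivAt_cutoffSeries hδ hχ ha l m hx).continuousAt.continuousWithinAt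
  | succ n ih =>
    rw [Nat.cast_succ,
      contDiffOn_succ_iff_hasFDerivWithinAt_of_uniqueDiffOn strip_open.uniqueDiffOn]
    refine ⟨by simp, _, ?_,
      fun x hx ↦ (hasFDerivAt_cutoffSeries hδ hχ ha l m hx).hasFDerivWithinAt⟩
    have deriv_fst := (ih hχ.deriv (ha.mul .fst_add_one) l m).sub
      (ih hχ (ha.mul (.snd_add_one_add l)) (l + 1) m)
    have deriv_snd := ih hχ (ha.mul (.fst_add_snd_sub m)) l (m + 1)
    exact (deriv_fst.smul contDiffOn_const).add (deriv_snd.smul contDiffOn_const)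

theorem contDiffOn_cutoffSeries (hδ : δ ≤ 1) (hχ : IsCutoff δ χ) (ha : HasPolynomialGrowth a)
    (l m : ℕ) : ContDiffOn ℝ ∞ (cutoffSeries χ a l m) {x | |x.2| < δ} :=
  contDiffOn_infty.2 (contDiffOn_nat_cutoffSeries hδ hχ ha l m)

end CutoffSeries

section Tau4

variable {phi : ℝ → ℝ} {δ : ℝ}

lemma isCutoff_one_sub (hphi : phi.HasTemperateGrowth) (hphi1 : EqOn phi 1 (ball 0 δ)) :
    IsCutoff δ (1 - phi) where
  hasTemperateGrowth := (Function.HasTemperateGrowth.const 1).sub hphi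
  eqOn_zero t ht := by simp [hphi1 ht]

lemma tsum_cutoffTerm_one_sub (phi : ℝ → ℝ) (k : ℕ) (x : ℝ × ℝ) :
    ∑' i, cutoffTerm (1 - phi) 1 0 0 (k, i) x = tauTerm phi k x := by
  rw [tauTerm, ← tsum_mul_left]
  refine tsum_congr fun i ↦ ?_
  simp only [cutoffTerm, Pi.one_apply, Pi.sub_apply, Nat.sub_zero, add_zero]
  ring

lemma tauTerm_eq_zero (hphi0 : phi 0 = 1) (k : ℕ) {x : ℝ × ℝ} (hx : x.1 = 0) :
    tauTerm phi k x = 0 := by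
  simp [tauTerm, hx, hphi0]

lemma tau4_eq_tsum (hphi0 : phi 0 = 1) (x : ℝ × ℝ) : tau4 phi x = ∑' k, tauTerm phi k x := by
  rw [tau4]
  split_ifs with hx
  · simp only [tauTerm_eq_zero hphi0 _ hx, tsum_zero]
  · rfl

lemma tau4_eqOn_cutoffSeries (hδ : δ ≤ 1) (hphi : phi.HasTemperateGrowth)
    (hphi1 : EqOn phi 1 (ball 0 δ)) :
    EqOn (tau4 phi) (cutoffSeries (1 - phi) 1 0 0) {x | |x.2| < δ} := by
  intro x hx
  have phi_zero : phi 0 = 1 := hphi1 (mem_ball_self ((abs_nonneg _).trans_lt hx))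
  have summable_terms := summable_cutoffTerm hδ (isCutoff_one_sub hphi hphi1) .one 0 0 hx
  simp only [tau4_eq_tsum phi_zero, cutoffSeries, summable_terms.tsum_prod,
    tsum_cutoffTerm_one_sub]

theorem summable_tauTerm (hδ : δ ≤ 1) (hphi : phi.HasTemperateGrowth)
    (hphi1 : EqOn phi 1 (ball 0 δ)) {x : ℝ × ℝ} (hx : |x.2| < δ) :
    Summable fun k ↦ tauTerm phi k x := by
  simpa only [tsum_cutoffTerm_one_sub] using
    (summable_cutoffTerm hδ (isCutoff_one_sub hphi hphi1) .one 0 0 hx).prod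

theorem tau4_smooth_general (hδ : δ ≤ 1) (hphi : phi.HasTemperateGrowth)
    (hphi1 : EqOn phi 1 (ball 0 δ)) :
    (∀ x : ℝ × ℝ, x.1 ≠ 0 → |x.2| < δ →
      (∀ k : ℕ, Summable (fun i : ℕ =>
        (((k + 1)! : ℝ) / ((k + 1 + i)! : ℝ)) * x.2 ^ (k + 1 + i + 1) / x.1 ^ (i + 1))) ∧
      Summable (fun k : ℕ => tauTerm phi k x)) ∧
    ContDiffOn ℝ (⊤ : ℕ∞) (tau4 phi) {x : ℝ × ℝ | |x.2| < δ} :=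
  ⟨fun x _ hx ↦ ⟨fun k ↦ summable_factorial_div_factorial_add_mul_pow_div_pow (k + 1) x.1 x.2,
      summable_tauTerm hδ hphi hphi1 hx⟩,
    (contDiffOn_cutoffSeries hδ (isCutoff_one_sub hphi hphi1) .one 0 0).congr
      (tau4_eqOn_cutoffSeries hδ hphi hphi1)⟩

end Tau4

/-- Let `phi` be `C^∞`, `phi = 1` on `[−1/2, 1/2]` and `phi = 0` outside `[−1, 1]`.  Then the
double series defining `τ₄` converges for `x₁ ≠ 0`, `|x₂| < 1/2`, and `τ₄` is `C^∞` on
`ℝ × (−1/2, 1/2)`. -/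
theorem tau4_smooth (phi : ℝ → ℝ) (hphi : ContDiff ℝ (⊤ : ℕ∞) phi)
    (hphi1 : ∀ t ∈ Set.Icc (-(1 / 2) : ℝ) (1 / 2), phi t = 1)
    (hphi0 : ∀ t : ℝ, t ∉ Set.Icc (-1 : ℝ) 1 → phi t = 0) :
    (∀ x : ℝ × ℝ, x.1 ≠ 0 → |x.2| < 1 / 2 →
      (∀ k : ℕ, Summable (fun i : ℕ =>
        (((k + 1)! : ℝ) / ((k + 1 + i)! : ℝ)) * x.2 ^ (k + 1 + i + 1) / x.1 ^ (i + 1))) ∧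
      Summable (fun k : ℕ => tauTerm phi k x)) ∧
    ContDiffOn ℝ (⊤ : ℕ∞) (tau4 phi) {x : ℝ × ℝ | |x.2| < 1 / 2} := by
  have hcompact : HasCompactSupport phi := .intro isCompact_Icc (hphi0 ·)
  exact tau4_smooth_general (by norm_num) (hcompact.hasTemperateGrowth hphi) fun t ht ↦
    hphi1 t (abs_le.1 (mem_ball_zero_iff.1 ht).le)
end
end

section
/- Define f, g : ℝ² → ℝ⁴ near 0 by f(x₁,x₂) = (x₁, x₁x₂, x₁x₂e^{x₂}, 0) and g(x₁,x₂) = (x₁, x₁x₂, x₁x₂e^{x₂}, g₄(x₁,x₂)), where g₄(x₁,x₂) = Σ_{k=1}^{∞} Σ_{i=0}^{∞} (k!/(k+i)!)·x₁^{k}·x₂^{k+i+1}. Then f and g are C^∞ L equivalent: there exist an open neighborhood U of 0 in ℝ⁴ and a C^∞ map π : U → ℝ⁴ with π(0)=0 and invertible derivative at 0, such that π(g(x)) = f(x) for all x in some neighborhood of 0 in ℝ². -/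
open scoped Nat Topology

noncomputable section

/-- `g₄(x₁,x₂) = Σ_{k=1}^∞ Σ_{i=0}^∞ (k!/(k+i)!)·x₁^k·x₂^{k+i+1}`, as a sum over
`p : ℕ × ℕ` with `k = p.1 + 1`, `i = p.2`. -/
def g4 (x : ℝ × ℝ) : ℝ :=
  ∑' p : ℕ × ℕ,
    (((p.1 + 1)! : ℝ) / ((p.1 + 1 + p.2)! : ℝ)) * x.1 ^ (p.1 + 1) * x.2 ^ (p.1 + 1 + p.2 + 1)

/-- `f(x₁,x₂) = (x₁, x₁x₂, x₁x₂e^{x₂}, 0)`. -/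
def fmap (x : ℝ × ℝ) : ℝ × ℝ × ℝ × ℝ :=
  (x.1, x.1 * x.2, x.1 * x.2 * Real.exp x.2, 0)

/-- `g(x₁,x₂) = (x₁, x₁x₂, x₁x₂e^{x₂}, g₄(x₁,x₂))`. -/
def gmap (x : ℝ × ℝ) : ℝ × ℝ × ℝ × ℝ :=
  (x.1, x.1 * x.2, x.1 * x.2 * Real.exp x.2, g4 x)

open MeasureTheory Set Filter
open scoped ContDiff

/-!
The double series for `g₄` sums over `i` to a difference of two copies of the divergent series
`∑ (k + 1)! s ^ k`, taken at `s = x₁` and at `s = x₁ / (1 - x₁ x₂)`. Replacing the factorials by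
`k! = ζ ∫₀^∞ e^{-ζr} (ζr)^k dr` along a ray `ℝ₊ζ` off the real axis turns that divergent series into
its Borel sum `h`, which is smooth on all of `ℝ` because the pole `1 / s` of the integrand is never
on the ray. With `u = x₁ x₂` and `v = x₁ x₂ e^{x₂}` this gives
`g₄ = v h(x₁) - u (1 - u)⁻² h(x₁ / (1 - u))`,
a smooth function of the first three components of `g`, so a shear of `ℝ⁴` carries `g` to `f`.
-/

section Shear

variable {𝕜 V W F : Type*} [NontriviallyNormedField 𝕜] [NormedAddCommGroup V] [NormedSpace 𝕜 V]
  [NormedAddCommGroup W] [NormedSpace 𝕜 W] [NormedAddCommGroup F] [NormedSpace 𝕜 F]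

lemma fderiv_comp_eq_zero_of_add_invariant {ψ : V → F} {ι : W →L[𝕜] V} {x : V}
    (hψ : DifferentiableAt 𝕜 ψ x) (hinv : ∀ y a, ψ (y + ι a) = ψ y) :
    (fderiv 𝕜 ψ x).comp ι = 0 := by
  have hline : HasFDerivAt (fun a => x + ι a) ι 0 := ι.hasFDerivAt.const_add x
  have hcomp : HasFDerivAt (fun a => ψ (x + ι a)) ((fderiv 𝕜 ψ x).comp ι) 0 :=
    HasFDerivAt.comp (g := ψ) 0 (by simpa using hψ.hasFDerivAt) hline
  simp only [hinv] at hcomp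
  exact hcomp.unique (hasFDerivAt_const _ _)

lemma exists_equiv_hasFDerivAt_shear {ψ : V → F} {ι : F →L[𝕜] V} {x : V}
    (hψ : DifferentiableAt 𝕜 ψ x) (hinv : ∀ y a, ψ (y + ι a) = ψ y) :
    ∃ D : V ≃L[𝕜] V, HasFDerivAt (fun y => y - ι (ψ y)) (D : V →L[𝕜] V) x := by
  have hnil : ∀ a, fderiv 𝕜 ψ x (ι a) = 0 := fun a =>
    congrArg (fun A => A a) (fderiv_comp_eq_zero_of_add_invariant hψ hinv)
  refine ⟨ContinuousLinearEquiv.equivOfInverse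
    (ContinuousLinearMap.id 𝕜 V - ι.comp (fderiv 𝕜 ψ x))
    (ContinuousLinearMap.id 𝕜 V + ι.comp (fderiv 𝕜 ψ x))
    (fun y => by simp [hnil]) (fun y => by simp [hnil]), ?_⟩
  exact (hasFDerivAt_id x).sub (ι.hasFDerivAt.comp x hψ.hasFDerivAt)

end Shear

lemma contDiff_infty_of_hasDerivAt_succ {𝕜 E : Type*} [NontriviallyNormedField 𝕜]
    [NormedAddCommGroup E] [NormedSpace 𝕜 E] {f : ℕ → 𝕜 → E}
    (hf : ∀ n x, HasDerivAt (f n) (f (n + 1) x) x) (n : ℕ) : ContDiff 𝕜 ∞ (f n) := by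
  have hiter : ∀ m, iteratedDeriv m (f n) = f (n + m) := by
    intro m
    induction m with
    | zero => simp
    | succ m ih => rw [iteratedDeriv_succ, ih]; exact funext fun x => (hf (n + m) x).deriv
  refine contDiff_of_differentiable_iteratedDeriv fun m _ => ?_
  rw [hiter m]
  exact fun x => (hf (n + m) x).differentiableAt

lemma integrableOn_pow_mul_exp_neg_mul {b : ℝ} (hb : 0 < b) (n : ℕ) :
    IntegrableOn (fun r : ℝ => r ^ n * Real.exp (-(b * r))) (Ioi 0) := by
  have hn : (-1 : ℝ) < n := by linarith [n.cast_nonneg (α := ℝ)]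
  simpa using integrableOn_rpow_mul_exp_neg_mul_rpow hn one_pos hb

lemma integral_pow_mul_exp_neg_mul {b : ℝ} (hb : 0 < b) (n : ℕ) :
    ∫ r in Ioi (0 : ℝ), r ^ n * Real.exp (-(b * r)) = n ! / b ^ (n + 1) := by
  have hΓ := Real.integral_rpow_mul_exp_neg_mul_Ioi (a := n + 1) (by positivity) hb
  rw [Real.Gamma_nat_eq_factorial] at hΓ
  rw [add_sub_cancel_right] at hΓ
  norm_cast at hΓ
  simpa [div_eq_inv_mul] using hΓ

section LaplaceRay

variable {ζ : ℂ}

lemma norm_exp_neg_mul_mul_pow (ζ : ℂ) (n : ℕ) {r : ℝ} (hr : 0 ≤ r) :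
    ‖Complex.exp (-(ζ * r)) * (ζ * r) ^ n‖ = ‖ζ‖ ^ n * (r ^ n * Real.exp (-(ζ.re * r))) := by
  rw [norm_mul, Complex.norm_exp, norm_pow, norm_mul, Complex.norm_of_nonneg hr, mul_pow]
  simp only [Complex.neg_re, Complex.re_mul_ofReal]
  ring

lemma integrableOn_exp_neg_mul_mul_pow (hζ : 0 < ζ.re) (n : ℕ) :
    IntegrableOn (fun r : ℝ => Complex.exp (-(ζ * r)) * (ζ * r) ^ n) (Ioi 0) := by
  refine Integrable.mono' ((integrableOn_pow_mul_exp_neg_mul hζ n).const_mul (‖ζ‖ ^ n))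
    (by fun_prop) ?_
  filter_upwards [ae_restrict_mem measurableSet_Ioi] with r hr
  exact (norm_exp_neg_mul_mul_pow ζ n (le_of_lt hr)).le

lemma integral_norm_exp_neg_mul_mul_pow (hζ : 0 < ζ.re) (n : ℕ) :
    ∫ r in Ioi (0 : ℝ), ‖Complex.exp (-(ζ * r)) * (ζ * r) ^ n‖
      = ‖ζ‖ ^ n * (n ! / ζ.re ^ (n + 1)) := by
  rw [← integral_pow_mul_exp_neg_mul hζ, ← integral_const_mul]
  exact setIntegral_congr_fun measurableSet_Ioi fun r hr =>
    norm_exp_neg_mul_mul_pow ζ n (le_of_lt hr)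

lemma tendsto_exp_neg_mul_mul_pow (hζ : 0 < ζ.re) (n : ℕ) :
    Tendsto (fun r : ℝ => Complex.exp (-(ζ * r)) * (ζ * r) ^ n) atTop (𝓝 0) := by
  have hreal : Tendsto (fun r : ℝ => ‖ζ‖ ^ n * (r ^ n * Real.exp (-(ζ.re * r)))) atTop (𝓝 0) := by
    simpa using (tendsto_rpow_mul_exp_neg_mul_atTop_nhds_zero n ζ.re hζ).const_mul (‖ζ‖ ^ n)
  refine squeeze_zero_norm' ?_ hreal
  filter_upwards [eventually_ge_atTop 0] with r hr
  exact (norm_exp_neg_mul_mul_pow ζ n hr).le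

lemma hasDerivAt_exp_neg_mul_mul_pow_succ (ζ : ℂ) (n : ℕ) (r : ℝ) :
    HasDerivAt (fun r : ℝ => Complex.exp (-(ζ * r)) * (ζ * r) ^ (n + 1))
      (ζ * ((n + 1) * (Complex.exp (-(ζ * r)) * (ζ * r) ^ n)
        - Complex.exp (-(ζ * r)) * (ζ * r) ^ (n + 1))) r := by
  have hlin : HasDerivAt (fun r : ℝ => ζ * (r : ℂ)) ζ r := by
    simpa using (Complex.ofRealCLM.hasDerivAt (x := r)).const_mul ζ
  refine (hlin.fun_neg.cexp.mul (hlin.fun_pow (n + 1))).congr_deriv ?_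
  push_cast [Nat.add_sub_cancel]
  ring

lemma mul_integral_exp_neg_mul_mul_pow (hζ : 0 < ζ.re) (n : ℕ) :
    ζ * ∫ r in Ioi (0 : ℝ), Complex.exp (-(ζ * r)) * (ζ * r) ^ n = n ! := by
  induction n with
  | zero =>
    have hζ0 : ζ ≠ 0 := by rintro rfl; simp at hζ
    simp only [pow_zero, mul_one, ← neg_mul]
    rw [integral_exp_mul_complex_Ioi (by simpa using hζ)]
    simp [hζ0]
  | succ n ih =>
    have hn := (integrableOn_exp_neg_mul_mul_pow hζ n).const_mul (n + 1 : ℂ)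
    have hn1 := integrableOn_exp_neg_mul_mul_pow hζ (n + 1)
    have hparts := integral_Ioi_of_hasDerivAt_of_tendsto'
      (fun r _ => hasDerivAt_exp_neg_mul_mul_pow_succ ζ n r) ((hn.sub hn1).const_mul ζ)
      (tendsto_exp_neg_mul_mul_pow hζ (n + 1))
    rw [integral_const_mul, integral_sub hn hn1, integral_const_mul] at hparts
    simp only [Complex.ofReal_zero, mul_zero, zero_pow n.succ_ne_zero, sub_zero] at hparts
    rw [Nat.factorial_succ]
    push_cast
    linear_combination (n + 1 : ℂ) * ih - hparts

end LaplaceRay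

section BorelSum

variable {ζ : ℂ}

/-- The `n`-th derivative in `s` of the Borel–Laplace integrand `e^{-w} w / (1 - w s)` at the point
`w = ζ r` of the ray through `ζ`. -/
def borelKernel (ζ : ℂ) (n : ℕ) (s r : ℝ) : ℂ :=
  n ! * Complex.exp (-(ζ * r)) * (ζ * r / (1 - ζ * r * s)) ^ (n + 1)

/-- The `n`-th derivative of the Borel sum `∫ e^{-w} w / (1 - w s) dw`, along the ray through `ζ`,
of the divergent series `∑ (k + 1)! s ^ k`. -/
def borelSum (ζ : ℂ) (n : ℕ) (s : ℝ) : ℂ :=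
  ζ * ∫ r in Ioi (0 : ℝ), borelKernel ζ n s r

lemma borelKernel_zero (ζ : ℂ) (s r : ℝ) :
    borelKernel ζ 0 s r = Complex.exp (-(ζ * r)) * (ζ * r / (1 - ζ * r * s)) := by
  simp [borelKernel]

lemma abs_im_le_norm_mul_norm_one_sub (ζ : ℂ) (r s : ℝ) :
    |ζ.im| ≤ ‖ζ‖ * ‖1 - ζ * r * s‖ := by
  have him : ((starRingEnd ℂ) ζ * (1 - ζ * r * s)).im = -ζ.im := by
    simp only [Complex.mul_im, Complex.mul_re, Complex.sub_im, Complex.sub_re, Complex.conj_re,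
      Complex.conj_im, Complex.ofReal_re, Complex.ofReal_im, Complex.one_re, Complex.one_im]
    ring
  rw [← abs_neg, ← him, ← Complex.norm_conj ζ, ← norm_mul]
  exact Complex.abs_im_le_norm _

lemma one_sub_mul_mul_ne_zero (hζ : ζ.im ≠ 0) (r s : ℝ) : 1 - ζ * r * s ≠ 0 := by
  intro h
  have := abs_im_le_norm_mul_norm_one_sub ζ r s
  rw [h, norm_zero, mul_zero] at this
  exact hζ (abs_nonpos_iff.1 this)

lemma norm_mul_div_one_sub_le (hζ : ζ.im ≠ 0) {r : ℝ} (hr : 0 ≤ r) (s : ℝ) :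
    ‖ζ * r / (1 - ζ * r * s)‖ ≤ ‖ζ‖ ^ 2 / |ζ.im| * r := by
  have hden : 0 < ‖1 - ζ * r * s‖ := norm_pos_iff.2 (one_sub_mul_mul_ne_zero hζ r s)
  rw [norm_div, norm_mul, Complex.norm_of_nonneg hr, div_le_iff₀ hden]
  calc ‖ζ‖ * r = ‖ζ‖ * r / |ζ.im| * |ζ.im| := (div_mul_cancel₀ _ (abs_ne_zero.2 hζ)).symm
    _ ≤ ‖ζ‖ * r / |ζ.im| * (‖ζ‖ * ‖1 - ζ * r * s‖) := by
      gcongr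
      exact abs_im_le_norm_mul_norm_one_sub ζ r s
    _ = ‖ζ‖ ^ 2 / |ζ.im| * r * ‖1 - ζ * r * s‖ := by ring

lemma norm_borelKernel_le (hζ : ζ.im ≠ 0) (n : ℕ) (s : ℝ) {r : ℝ} (hr : 0 ≤ r) :
    ‖borelKernel ζ n s r‖
      ≤ n ! * (‖ζ‖ ^ 2 / |ζ.im|) ^ (n + 1) * (r ^ (n + 1) * Real.exp (-(ζ.re * r))) := by
  calc ‖borelKernel ζ n s r‖
      = n ! * Real.exp (-(ζ.re * r)) * ‖ζ * r / (1 - ζ * r * s)‖ ^ (n + 1) := by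
        simp [borelKernel, Complex.norm_exp]
    _ ≤ n ! * Real.exp (-(ζ.re * r)) * (‖ζ‖ ^ 2 / |ζ.im| * r) ^ (n + 1) := by
        gcongr
        exact norm_mul_div_one_sub_le hζ hr s
    _ = _ := by ring

lemma continuous_borelKernel (hζ : ζ.im ≠ 0) (n : ℕ) (s : ℝ) : Continuous (borelKernel ζ n s) := by
  have hquot : Continuous fun r : ℝ => ζ * r / (1 - ζ * r * s) :=
    Continuous.div (by fun_prop) (by fun_prop) fun r => one_sub_mul_mul_ne_zero hζ r s
  unfold borelKernel
  fun_prop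

lemma integrableOn_borelKernel (hre : 0 < ζ.re) (him : ζ.im ≠ 0) (n : ℕ) (s : ℝ) :
    IntegrableOn (borelKernel ζ n s) (Ioi 0) := by
  refine Integrable.mono' ((integrableOn_pow_mul_exp_neg_mul hre (n + 1)).const_mul
    (n ! * (‖ζ‖ ^ 2 / |ζ.im|) ^ (n + 1)))
    (continuous_borelKernel him n s).aestronglyMeasurable ?_
  filter_upwards [ae_restrict_mem measurableSet_Ioi] with r hr
  exact norm_borelKernel_le him n s (le_of_lt hr)

lemma hasDerivAt_borelKernel (hζ : ζ.im ≠ 0) (n : ℕ) (s r : ℝ) :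
    HasDerivAt (fun s => borelKernel ζ n s r) (borelKernel ζ (n + 1) s r) s := by
  have hden : HasDerivAt (fun s : ℝ => 1 - ζ * r * (s : ℂ)) (-(ζ * r)) s := by
    simpa using ((Complex.ofRealCLM.hasDerivAt (x := s)).const_mul (ζ * r)).const_sub 1
  have hne := one_sub_mul_mul_ne_zero hζ r s
  have hquot : HasDerivAt (fun s : ℝ => ζ * r / (1 - ζ * r * (s : ℂ)))
      ((ζ * r / (1 - ζ * r * s)) ^ 2) s := by
    refine ((hasDerivAt_const s (ζ * r : ℂ)).div hden hne).congr_deriv ?_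
    field_simp
    ring
  refine ((hquot.pow (n + 1)).const_mul (n ! * Complex.exp (-(ζ * r)))).congr_deriv ?_
  rw [borelKernel, Nat.factorial_succ]
  push_cast [Nat.add_sub_cancel]
  ring

lemma hasDerivAt_borelSum (hre : 0 < ζ.re) (him : ζ.im ≠ 0) (n : ℕ) (s : ℝ) :
    HasDerivAt (borelSum ζ n) (borelSum ζ (n + 1) s) s := by
  refine HasDerivAt.const_mul ζ (hasDerivAt_integral_of_dominated_loc_of_deriv_le univ_mem
    (.of_forall fun s => (continuous_borelKernel him n s).aestronglyMeasurable)
    (integrableOn_borelKernel hre him n s)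
    (continuous_borelKernel him (n + 1) s).aestronglyMeasurable ?_
    ((integrableOn_pow_mul_exp_neg_mul hre (n + 2)).const_mul
      ((n + 1)! * (‖ζ‖ ^ 2 / |ζ.im|) ^ (n + 2)))
    (.of_forall fun r s _ => hasDerivAt_borelKernel him n s r)).2
  filter_upwards [ae_restrict_mem measurableSet_Ioi] with r hr s _
  exact norm_borelKernel_le him (n + 1) s (le_of_lt hr)

lemma contDiff_borelSum (hre : 0 < ζ.re) (him : ζ.im ≠ 0) (n : ℕ) : ContDiff ℝ ∞ (borelSum ζ n) :=
  contDiff_infty_of_hasDerivAt_succ (hasDerivAt_borelSum hre him) n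

lemma exp_mul_borelKernel_zero (ζ : ℂ) (s r : ℝ) {u : ℝ} (hu : u ≠ 1) :
    Complex.exp (ζ * r * u) * borelKernel ζ 0 s r
      = ((1 - u)⁻¹ : ℝ) * borelKernel ζ 0 (s / (1 - u)) ((1 - u) * r) := by
  have hu' : (1 - u : ℂ) ≠ 0 := by exact_mod_cast sub_ne_zero.2 hu.symm
  have hexp : Complex.exp (ζ * r * u) * Complex.exp (-(ζ * r))
      = Complex.exp (-(ζ * ((1 - u) * r))) := by
    rw [← Complex.exp_add]; congr 1; ring
  have hden : ζ * ((1 - u) * r) * (s / (1 - u)) = ζ * r * s := by field_simp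
  simp only [borelKernel_zero]
  push_cast
  rw [hden, ← hexp]
  field_simp

lemma integrableOn_exp_mul_borelKernel_zero (hre : 0 < ζ.re) (him : ζ.im ≠ 0) (s : ℝ) {u : ℝ}
    (hu : u < 1) :
    IntegrableOn (fun r : ℝ => Complex.exp (ζ * r * u) * borelKernel ζ 0 s r) (Ioi 0) := by
  simp only [exp_mul_borelKernel_zero ζ s _ hu.ne]
  refine Integrable.const_mul ?_ _
  rw [← IntegrableOn, integrableOn_Ioi_comp_mul_left_iff _ _ (sub_pos.2 hu), mul_zero]
  exact integrableOn_borelKernel hre him 0 _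

lemma mul_integral_exp_mul_borelKernel_zero (ζ : ℂ) (s : ℝ) {u : ℝ} (hu : u < 1) :
    ζ * ∫ r in Ioi (0 : ℝ), Complex.exp (ζ * r * u) * borelKernel ζ 0 s r
      = (((1 - u) ^ 2)⁻¹ : ℝ) * borelSum ζ 0 (s / (1 - u)) := by
  simp only [exp_mul_borelKernel_zero ζ s _ hu.ne]
  rw [integral_const_mul, integral_comp_mul_left_Ioi _ _ (sub_pos.2 hu), mul_zero, borelSum,
    Complex.real_smul, pow_two, mul_inv]
  push_cast
  ring

end BorelSum

section ExpQuotient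

lemma hasSum_of_hasSum_sum_antidiagonal {A E : Type*} [AddCommMonoid A] [Finset.HasAntidiagonal A]
    [AddCommMonoid E] [TopologicalSpace E] [ContinuousAdd E] [T3Space E] {f : A × A → E} {a : E}
    (hf : Summable f) (h : HasSum (fun n => ∑ p ∈ Finset.HasAntidiagonal.antidiagonal n, f p) a) :
    HasSum f a := by
  have hsigma := Finset.HasAntidiagonal.sigmaAntidiagonalEquivProd.hasSum_iff.2 hf.hasSum
  have hfibers := hsigma.sigma fun n => Finset.hasSum _ f
  rw [h.unique hfibers]
  exact hf.hasSum

/-- The terms of the double series `∑_{m,i} z^m t^{m+1+i} / (m+1+i)!`, which sums to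
`(e^t - e^{zt}) / (1 - z)`. -/
def expQuotientTerm (z t : ℂ) (p : ℕ × ℕ) : ℂ :=
  z ^ p.1 * t ^ (p.1 + 1 + p.2) / (p.1 + 1 + p.2)!

lemma summable_expQuotientTerm (z t : ℂ) : Summable (expQuotientTerm z t) := by
  have hm := Real.summable_pow_div_factorial (‖z‖ * ‖t‖)
  have hi := (Real.summable_pow_div_factorial ‖t‖).mul_left ‖t‖
  refine Summable.of_norm_bounded
    (hm.mul_of_nonneg hi (fun _ => by positivity) (fun _ => by positivity)) ?_
  rintro ⟨m, i⟩
  have hfact : (m ! * i ! : ℝ) ≤ (m + 1 + i)! := by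
    exact_mod_cast (Nat.le_of_dvd (Nat.factorial_pos _)
      (Nat.factorial_mul_factorial_dvd_factorial_add m i)).trans (Nat.factorial_le (by lia))
  calc ‖expQuotientTerm z t (m, i)‖
      = ‖z‖ ^ m * ‖t‖ ^ (m + 1 + i) / (m + 1 + i)! := by simp [expQuotientTerm]
    _ ≤ ‖z‖ ^ m * ‖t‖ ^ (m + 1 + i) / (m ! * i !) := by gcongr
    _ = (‖z‖ * ‖t‖) ^ m / m ! * (‖t‖ * (‖t‖ ^ i / i !)) := by
      rw [mul_pow]; field_simp; ring

lemma hasSum_pow_succ_div_factorial_succ (w : ℂ) :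
    HasSum (fun n : ℕ => w ^ (n + 1) / (n + 1)!) (Complex.exp w - 1) := by
  have hexp := NormedSpace.expSeries_div_hasSum_exp w
  rw [← Complex.exp_eq_exp_ℂ] at hexp
  simpa using (hasSum_nat_add_iff' 1).2 hexp

lemma sum_antidiagonal_expQuotientTerm {z : ℂ} (hz : z ≠ 1) (t : ℂ) (n : ℕ) :
    ∑ p ∈ Finset.HasAntidiagonal.antidiagonal n, expQuotientTerm z t p
      = (t ^ (n + 1) / (n + 1)! - (z * t) ^ (n + 1) / (n + 1)!) / (1 - z) := by
  have hterm : ∀ p ∈ Finset.HasAntidiagonal.antidiagonal n,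
      expQuotientTerm z t p = z ^ p.1 * (t ^ (n + 1) / (n + 1)!) := by
    intro p hp
    have hp' : p.1 + 1 + p.2 = n + 1 := by rw [← Finset.HasAntidiagonal.mem_antidiagonal.1 hp]; ring
    rw [expQuotientTerm, hp', mul_div_assoc]
  have hz' : 1 - z ≠ 0 := sub_ne_zero.2 hz.symm
  rw [Finset.sum_congr rfl hterm, ← Finset.sum_mul,
    Finset.Nat.sum_antidiagonal_eq_sum_range_succ_mk, eq_div_iff hz', mul_right_comm,
    Nat.succ_eq_add_one, geom_sum_mul_neg]
  ring

lemma hasSum_expQuotientTerm {z : ℂ} (hz : z ≠ 1) (t : ℂ) :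
    HasSum (expQuotientTerm z t) ((Complex.exp t - Complex.exp (z * t)) / (1 - z)) := by
  refine hasSum_of_hasSum_sum_antidiagonal (summable_expQuotientTerm z t) ?_
  simp only [sum_antidiagonal_expQuotientTerm hz]
  simpa using ((hasSum_pow_succ_div_factorial_succ t).sub
    (hasSum_pow_succ_div_factorial_succ (z * t))).div_const (1 - z)

end ExpQuotient

section Resummation

variable {ζ : ℂ} {s t : ℝ}

/-- The integrand on the ray through `ζ` that represents, up to the factor `ζ s t`, the term of
`g₄(s, t)` with index `p`. -/
def g4Integrand (ζ : ℂ) (s t : ℝ) (p : ℕ × ℕ) (r : ℝ) : ℂ :=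
  expQuotientTerm s t p * (Complex.exp (-(ζ * r)) * (ζ * r) ^ (p.1 + 1))

lemma integrableOn_g4Integrand (hζ : 0 < ζ.re) (s t : ℝ) (p : ℕ × ℕ) :
    IntegrableOn (g4Integrand ζ s t p) (Ioi 0) :=
  (integrableOn_exp_neg_mul_mul_pow hζ (p.1 + 1)).const_mul _

lemma mul_integral_g4Integrand (hζ : 0 < ζ.re) (s t : ℝ) (p : ℕ × ℕ) :
    (s * t : ℝ) * (ζ * ∫ r in Ioi (0 : ℝ), g4Integrand ζ s t p r)
      = (((p.1 + 1)! / (p.1 + 1 + p.2)! * s ^ (p.1 + 1) * t ^ (p.1 + 1 + p.2 + 1) : ℝ) : ℂ) := by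
  simp only [g4Integrand]
  rw [integral_const_mul, mul_left_comm ζ, mul_integral_exp_neg_mul_mul_pow hζ, expQuotientTerm]
  push_cast
  ring

lemma summable_integral_norm_g4Integrand (hζ : 0 < ζ.re) (ht : |t| < 1)
    (hst : ‖ζ‖ * |s * t| < ζ.re) :
    Summable fun p => ∫ r in Ioi (0 : ℝ), ‖g4Integrand ζ s t p r‖ := by
  have hm := (summable_geometric_of_lt_one (by positivity) ((div_lt_one hζ).2 hst)).mul_left
    (‖ζ‖ * |t| / ζ.re ^ 2)
  have hi := summable_geometric_of_lt_one (abs_nonneg t) ht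
  refine Summable.of_nonneg_of_le (fun p => integral_nonneg fun _ => norm_nonneg _) ?_
    (hm.mul_of_nonneg hi (fun _ => by positivity) (fun _ => by positivity))
  rintro ⟨m, i⟩
  have hfact : ((m + 1)! : ℝ) ≤ (m + 1 + i)! := by exact_mod_cast Nat.factorial_le (by lia)
  calc ∫ r in Ioi (0 : ℝ), ‖g4Integrand ζ s t (m, i) r‖
      = |s| ^ m * |t| ^ (m + 1 + i) / (m + 1 + i)!
          * (‖ζ‖ ^ (m + 1) * ((m + 1)! / ζ.re ^ (m + 2))) := by
        simp only [g4Integrand, norm_mul (expQuotientTerm _ _ _)]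
        rw [integral_const_mul, integral_norm_exp_neg_mul_mul_pow hζ]
        simp [expQuotientTerm]
    _ ≤ |s| ^ m * |t| ^ (m + 1 + i) / (m + 1 + i)!
          * (‖ζ‖ ^ (m + 1) * ((m + 1 + i)! / ζ.re ^ (m + 2))) := by gcongr
    _ = ‖ζ‖ * |t| / ζ.re ^ 2 * (‖ζ‖ * |s * t| / ζ.re) ^ m * |t| ^ i := by
        rw [abs_mul, div_pow]; field_simp; ring

lemma hasSum_g4Integrand (hζ : ζ.im ≠ 0) (s t r : ℝ) :
    HasSum (fun p => g4Integrand ζ s t p r)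
      (Real.exp t * borelKernel ζ 0 s r
        - Complex.exp (ζ * r * (s * t : ℝ)) * borelKernel ζ 0 s r) := by
  have hz : ζ * r * s ≠ 1 := fun h => one_sub_mul_mul_ne_zero hζ r s (by rw [h, sub_self])
  convert! (hasSum_expQuotientTerm hz t).mul_left (Complex.exp (-(ζ * r)) * (ζ * r)) using 1
  · funext p
    simp only [g4Integrand, expQuotientTerm]
    ring
  · rw [borelKernel_zero]
    push_cast
    ring_nf

lemma hasSum_integral_g4Integrand (hre : 0 < ζ.re) (him : ζ.im ≠ 0) (ht : |t| < 1)
    (hst : ‖ζ‖ * |s * t| < ζ.re) :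
    HasSum (fun p => ζ * ∫ r in Ioi (0 : ℝ), g4Integrand ζ s t p r)
      (Real.exp t * borelSum ζ 0 s
        - (((1 - s * t) ^ 2)⁻¹ : ℝ) * borelSum ζ 0 (s / (1 - s * t))) := by
  have hst1 : s * t < 1 := by
    have : |s * t| < 1 := by nlinarith [Complex.re_le_norm ζ, abs_nonneg (s * t)]
    exact (abs_lt.1 this).2
  have hsum := (hasSum_integral_of_summable_integral_norm (integrableOn_g4Integrand hre s t)
    (summable_integral_norm_g4Integrand hre ht hst)).mul_left ζ
  simp only [fun r => (hasSum_g4Integrand him s t r).tsum_eq] at hsum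
  rwa [integral_sub ((integrableOn_borelKernel hre him 0 s).const_mul _)
    (integrableOn_exp_mul_borelKernel_zero hre him s hst1), integral_const_mul, mul_sub,
    mul_integral_exp_mul_borelKernel_zero ζ s hst1, mul_left_comm] at hsum

/-- The function of the first three coordinates `y₁ = x₁`, `y₂ = x₁ x₂`, `y₃ = x₁ x₂ e^{x₂}` that
reproduces `g₄`, for `h` the Borel sum of `∑ (k + 1)! s ^ k`. It is regarded as a function on `ℝ⁴`
that does not depend on the last coordinate. -/
def g4Correction (h : ℝ → ℝ) (y : ℝ × ℝ × ℝ × ℝ) : ℝ :=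
  y.2.2.1 * h y.1 - y.2.1 / (1 - y.2.1) ^ 2 * h (y.1 / (1 - y.2.1))

lemma contDiffAt_g4Correction {h : ℝ → ℝ} {n : WithTop ℕ∞} (hh : ContDiff ℝ n h) {y : ℝ × ℝ × ℝ × ℝ}
    (hy : y.2.1 ≠ 1) : ContDiffAt ℝ n (g4Correction h) y := by
  have hne : 1 - y.2.1 ≠ 0 := sub_ne_zero.2 hy.symm
  unfold g4Correction
  fun_prop (disch := simpa using hne)

lemma g4_eq_g4Correction (hre : 0 < ζ.re) (him : ζ.im ≠ 0) {x : ℝ × ℝ} (hx₂ : |x.2| < 1)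
    (hx : ‖ζ‖ * |x.1 * x.2| < ζ.re) :
    g4 x = g4Correction (fun s => (borelSum ζ 0 s).re) (gmap x) := by
  have hsum := (hasSum_integral_g4Integrand hre him hx₂ hx).mul_left ((x.1 * x.2 : ℝ) : ℂ)
  simp only [mul_integral_g4Integrand hre] at hsum
  have hre_sum := (Complex.hasSum_re hsum).tsum_eq
  simp only [Complex.ofReal_re, Complex.re_ofReal_mul, Complex.sub_re] at hre_sum
  rw [g4, hre_sum, g4Correction, gmap]
  ring

end Resummation

lemma exists_contDiff_eventually_g4_eq :
    ∃ h : ℝ → ℝ, ContDiff ℝ ∞ h ∧ ∀ᶠ x in 𝓝 0, g4 x = g4Correction h (gmap x) := by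
  have hre : 0 < (1 + Complex.I).re := by simp
  have him : (1 + Complex.I).im ≠ 0 := by simp
  refine ⟨fun s => (borelSum (1 + Complex.I) 0 s).re,
    Complex.reCLM.contDiff.comp (contDiff_borelSum hre him 0), ?_⟩
  have hx₂ : ∀ᶠ x : ℝ × ℝ in 𝓝 0, |x.2| < 1 :=
    (isOpen_lt (by fun_prop) continuous_const).mem_nhds (by simp)
  have hx : ∀ᶠ x : ℝ × ℝ in 𝓝 0, ‖1 + Complex.I‖ * |x.1 * x.2| < (1 + Complex.I).re :=
    (isOpen_lt (by fun_prop) continuous_const).mem_nhds (by simp)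
  filter_upwards [hx₂, hx] with x h₂ h₁₂ using g4_eq_g4Correction hre him h₂ h₁₂

/-- `f` and `g` are $C^\infty$ L equivalent: there is a $C^\infty$ map $π$ defined near
$0$ in $ℝ^4$, with $π(0)=0$ and invertible derivative at $0$, such that $π ∘ g = f$ near
$0$ in $ℝ^2$. -/
theorem fmap_gmap_smooth_L_equivalent :
    ∃ π : ℝ × ℝ × ℝ × ℝ → ℝ × ℝ × ℝ × ℝ,
      ContDiffAt ℝ (⊤ : ℕ∞) π 0 ∧ π 0 = 0 ∧
      (∃ D : (ℝ × ℝ × ℝ × ℝ) ≃L[ℝ] ℝ × ℝ × ℝ × ℝ,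
        HasFDerivAt π (D : (ℝ × ℝ × ℝ × ℝ) →L[ℝ] ℝ × ℝ × ℝ × ℝ) 0) ∧
      ∀ᶠ x : ℝ × ℝ in 𝓝 0, π (gmap x) = fmap x := by
  obtain ⟨h, hh, hg4⟩ := exists_contDiff_eventually_g4_eq
  let ι : ℝ →L[ℝ] ℝ × ℝ × ℝ × ℝ :=
    .inr ℝ ℝ (ℝ × ℝ × ℝ) ∘L .inr ℝ ℝ (ℝ × ℝ) ∘L .inr ℝ ℝ ℝ
  have hsmooth : ContDiffAt ℝ ∞ (g4Correction h) 0 := contDiffAt_g4Correction hh (by simp)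
  have hinv : ∀ y a, g4Correction h (y + ι a) = g4Correction h y := fun y a => by
    simp [g4Correction, ι]
  refine ⟨fun y => y - ι (g4Correction h y), ?_, by simp [g4Correction],
    exists_equiv_hasFDerivAt_shear (hsmooth.differentiableAt (by simp)) hinv, ?_⟩
  · exact contDiffAt_id.sub (ι.contDiff.contDiffAt.comp 0 hsmooth)
  · filter_upwards [hg4] with x hx
    rw [← hx]
    simp [gmap, fmap, ι]
end
end

section
/- Define f, g : ℝ² → ℝ⁴ near 0 by f(x₁,x₂) = (x₁, x₁x₂, x₁x₂e^{x₂}, 0) and g(x₁,x₂) = (x₁, x₁x₂, x₁x₂e^{x₂}, g₄(x₁,x₂)), where g₄(x₁,x₂) = Σ_{k=1}^{∞} Σ_{i=0}^{∞} (k!/(k+i)!)·x₁^{k}·x₂^{k+i+1}. Then f and g are not analytically R-L equivalent: there do not exist maps τ defined near 0 in ℝ² and π defined near 0 in ℝ⁴, both real analytic at 0, with τ(0)=0, π(0)=0 and invertible derivatives at 0, such that π∘f = g∘τ on a neighborhood of 0 in ℝ². -/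
open scoped Nat Topology

noncomputable section

/-!
The image of `fmap` lies in the hyperplane `z₄ = 0`, so an equivalence would put the image of `gmap`
in an analytic hypersurface `h = 0` with `dh(0) ≠ 0`. Differentiating `h (gmap (x, y)) = 0` in `x`
at `x = 0` and using that `1`, `y`, `y e^y` are linearly independent gives `∂h/∂z₄(0) ≠ 0`, so the
hypersurface is a graph `z₄ = F(z₁, z₂, z₃)` with `F` analytic, and `g₄(x, y) = F(x, xy, xye^y)`.

Comparing coefficients of `xⁿ` determines the degree `n` part of `F` on the curve `(1, y, y e^y)`,
and by algebraic independence of `y` and `y e^y` everywhere: in the chart `z₁ = 1` it is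
`n! (z₃ - z₂ ∑_{j < n} z₂ʲ / j!)`. Its value `n!` at `(1, 0, 1)` outgrows every geometric sequence,
so the series of `F` cannot converge.
-/

open Filter Asymptotics
open scoped ContDiff

section Analytic

variable {𝕜 E F : Type*} [RCLike 𝕜] [NormedAddCommGroup E] [NormedSpace 𝕜 E] [CompleteSpace E]
  [NormedAddCommGroup F] [NormedSpace 𝕜 F]

theorem exists_analyticAt_eventually_leftInverse [CompleteSpace F] {f : E → F} {a : E}
    (hf : AnalyticAt 𝕜 f a) {D : E ≃L[𝕜] F} (hD : HasFDerivAt f (D : E →L[𝕜] F) a) :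
    ∃ g : F → E, AnalyticAt 𝕜 g (f a) ∧ HasFDerivAt g (D.symm : F →L[𝕜] E) (f a) ∧
      ∀ᶠ x in 𝓝 a, g (f x) = x := by
  have hω : ContDiffAt 𝕜 ω f a := hf.contDiffAt
  have hs : HasStrictFDerivAt f (D : E →L[𝕜] F) a := hω.hasStrictFDerivAt' hD (by simp)
  exact ⟨hs.localInverse f D a, (hω.to_localInverse hD (by simp)).analyticAt,
    hs.to_localInverse.hasFDerivAt, hs.eventually_left_inverse⟩

theorem exists_analyticAt_eventually_eq_of_fderiv_ne_zero {h : E × 𝕜 → 𝕜} {u : E × 𝕜}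
    (hh : AnalyticAt 𝕜 h u) (hne : fderiv 𝕜 h u (0, 1) ≠ 0) :
    ∃ ψ : E → 𝕜, AnalyticAt 𝕜 ψ u.1 ∧ ∀ᶠ z in 𝓝 u, h z = h u → ψ z.1 = z.2 := by
  have hω : ContDiffAt 𝕜 ω h u := hh.contDiffAt
  have hinv : (fderiv 𝕜 h u ∘L .inr 𝕜 E 𝕜).IsInvertible :=
    ⟨ContinuousLinearEquiv.unitsEquivAut 𝕜 (Units.mk0 _ hne), by ext; simp⟩
  exact ⟨hω.implicitFunction (by simp) hinv,
    (hω.contDiffAt_implicitFunction (by simp) hinv).analyticAt,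
    (hω.eventually_apply_eq_iff_implicitFunction (by simp) hinv).mono fun _ hz ↦ hz.1⟩

theorem exists_analyticAt_eventually_apply_eq_zero [CompleteSpace F] {X Y : Type*} {l : Filter X}
    {l' : Filter Y} {f : X → E} {g : Y → F} {τ : X → Y} {π : E → F} {a : E} {ℓ : E →L[𝕜] 𝕜}
    (hℓ : ℓ ≠ 0) (hℓf : ∀ᶠ x in l, ℓ (f x) = 0) (hf : Tendsto f l (𝓝 a)) (hτ : l' ≤ map τ l)
    (hπ : AnalyticAt 𝕜 π a) {D : E ≃L[𝕜] F} (hD : HasFDerivAt π (D : E →L[𝕜] F) a)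
    (heq : ∀ᶠ x in l, π (f x) = g (τ x)) :
    ∃ h : F → 𝕜, AnalyticAt 𝕜 h (π a) ∧ fderiv 𝕜 h (π a) ≠ 0 ∧ ∀ᶠ z in l', h (g z) = 0 := by
  obtain ⟨ρ, hρ, hDρ, hρπ⟩ := exists_analyticAt_eventually_leftInverse hπ hD
  refine ⟨ℓ ∘ ρ, (ℓ.analyticAt _).comp hρ, fun hzero ↦ hℓ ?_, hτ (eventually_map.mpr ?_)⟩
  · rw [(ℓ.hasFDerivAt.comp _ hDρ).fderiv] at hzero
    ext x
    simpa using congr($hzero (D x))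
  · filter_upwards [hℓf, heq, hf.eventually hρπ] with x hℓx hx hρx
    rw [← hx, Function.comp_apply, hρx, hℓx]

end Analytic

section PowerSeries

variable {𝕜 E F : Type*} [NontriviallyNormedField 𝕜] [NormedAddCommGroup E] [NormedSpace 𝕜 E]
  [NormedAddCommGroup F] [NormedSpace 𝕜 F]

theorem apply_diagonal_eq_coeff_of_hasFPowerSeriesAt_smul {f : E → F}
    {p : FormalMultilinearSeries 𝕜 E F} {q : FormalMultilinearSeries 𝕜 𝕜 F} {v : E}
    (hp : HasFPowerSeriesAt f p 0) (hq : HasFPowerSeriesAt (fun x : 𝕜 ↦ f (x • v)) q 0) (n : ℕ) :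
    p n (fun _ ↦ v) = q.coeff n := by
  let ray : 𝕜 →L[𝕜] E := .toSpanSingleton 𝕜 v
  have hray : HasFPowerSeriesAt (f ∘ ray) (p.compContinuousLinearMap ray) 0 :=
    HasFPowerSeriesAt.compContinuousLinearMap (by simpa using hp)
  rw [← hray.eq_formalMultilinearSeries hq, FormalMultilinearSeries.coeff,
    FormalMultilinearSeries.compContinuousLinearMap_apply]
  congr 1 with i
  simp [ray]

theorem eventually_norm_apply_diagonal_lt_factorial {p : FormalMultilinearSeries 𝕜 E F}
    (hp : 0 < p.radius) (v : E) : ∀ᶠ n in atTop, ‖p n fun _ ↦ v‖ < n ! := by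
  obtain ⟨C, r, -, -, hC⟩ := p.le_mul_pow_of_radius_pos hp
  have hlim : Tendsto (fun n : ℕ ↦ C * ((r * ‖v‖) ^ n / n !)) atTop (𝓝 0) := by
    simpa using (FloorSemiring.tendsto_pow_div_factorial_atTop (r * ‖v‖)).const_mul C
  filter_upwards [hlim.eventually_lt_const one_pos] with n hn
  have hfact : (0 : ℝ) < n ! := by positivity
  calc ‖p n fun _ ↦ v‖ ≤ ‖p n‖ * ‖v‖ ^ n := by simpa using (p n).le_opNorm fun _ ↦ v
    _ ≤ C * r ^ n * ‖v‖ ^ n := by gcongr; exact hC n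
    _ = C * ((r * ‖v‖) ^ n / n !) * n ! := by rw [mul_pow]; field_simp
    _ < n ! := by simpa using mul_lt_mul_of_pos_right hn hfact

end PowerSeries

open Polynomial
open scoped Polynomial.Bivariate

section Bivariate

theorem exists_evalEval_eq_apply_diagonal {R E ι : Type*} [CommSemiring R] [AddCommMonoid E]
    [Module R E] [Finite ι] (M : MultilinearMap R (fun _ : ι ↦ E) R) (e₀ e₁ e₂ : E) :
    ∃ Q : R[X][Y], ∀ v w : R, Q.evalEval v w = M fun _ ↦ e₀ + v • e₁ + w • e₂ := by
  classical
  have := Fintype.ofFinite ι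
  let e : Fin 3 → E := ![e₀, e₁, e₂]
  let c : Fin 3 → R[X][Y] := ![1, C X, Y]
  refine ⟨∑ r : ι → Fin 3, (∏ i, c (r i)) * CC (M fun i ↦ e (r i)), fun v w ↦ ?_⟩
  have hsum : e₀ + v • e₁ + w • e₂ = ∑ j, (c j).evalEval v w • e j := by
    simp [Fin.sum_univ_three, c, e, evalEval_C]
  simp only [hsum, M.map_sum, M.map_smul_univ, evalEval_finsetSum, evalEval_mul, evalEval_prod,
    evalEval_CC, smul_eq_mul]

theorem evalEval_eq_sum_range {R : Type*} [CommSemiring R] (Q : R[X][Y]) (x y : R) :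
    Q.evalEval x y = ∑ k ∈ Finset.range (Q.natDegree + 1), (Q.coeff k).eval x * y ^ k := by
  rw [← eval₂_evalRingHom, eval₂_eq_sum_range]
  rfl

theorem eq_zero_of_eventually_evalEval_eq_zero {u : ℝ → ℝ}
    (hu : ∀ p : ℝ[X], p.eval =o[atTop] u) {Q : ℝ[X][Y]}
    (hQ : ∀ᶠ y in atTop, Q.evalEval y (u y) = 0) : Q = 0 := by
  -- The term of top degree in `u` is the negative of the others, which are `o(u ^ d)`.
  let d := Q.natDegree
  have one_isBigO : (fun _ ↦ 1 : ℝ → ℝ) =O[atTop] u := by simpa using (hu 1).isBigO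
  have hlower (k : ℕ) (hk : k ∈ Finset.range d) :
      (fun y ↦ (Q.coeff k).eval y * u y ^ k) =o[atTop] (u · ^ d) := by
    obtain ⟨m, hm⟩ := Nat.exists_eq_add_of_lt (Finset.mem_range.mp hk)
    have := ((hu (Q.coeff k)).mul_isBigO (isBigO_refl (u · ^ k) atTop)).mul_isBigO
      (one_isBigO.pow m)
    rw [hm]
    refine this.congr (fun y ↦ by simp) fun y ↦ by ring
  have hlead : (fun y ↦ (Q.coeff d).eval y * u y ^ d) =o[atTop] (u · ^ d) := by
    refine (IsLittleO.fun_sum hlower).neg_left.congr' ?_ .rfl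
    filter_upwards [hQ] with y hy
    rwa [evalEval_eq_sum_range, Finset.sum_range_succ, ← neg_eq_iff_add_eq_zero] at hy
  have hlim : Tendsto (Q.coeff d).eval atTop (𝓝 0) := by
    refine hlead.tendsto_div_nhds_zero.congr' ?_
    filter_upwards [one_isBigO.eq_zero_imp] with y hy
    exact mul_div_cancel_right₀ _ (pow_ne_zero d fun h ↦ one_ne_zero (hy h))
  have : Q.coeff d = 0 := by simpa using (((Q.coeff d).tendsto_nhds_iff).mp hlim).1
  simpa [d] using this

theorem eval_isLittleO_mul_exp (p : ℝ[X]) : p.eval =o[atTop] fun y ↦ y * Real.exp y := by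
  have hexp : p.eval =o[atTop] Real.exp :=
    isLittleO_of_tendsto (fun y hy ↦ absurd hy y.exp_ne_zero) p.tendsto_div_exp_atTop
  refine hexp.trans_isBigO (.of_bound' ?_)
  filter_upwards [eventually_ge_atTop 1] with y hy
  rw [norm_mul]
  exact le_mul_of_one_le_left (norm_nonneg _) (hy.trans (le_abs_self y))

theorem eq_zero_of_eventually_evalEval_mul_exp_eq_zero {Q : ℝ[X][Y]}
    (hQ : ∀ᶠ y in 𝓝 0, Q.evalEval y (y * Real.exp y) = 0) : Q = 0 := by
  have hana : AnalyticOnNhd ℝ (fun y ↦ Q.evalEval y (y * Real.exp y)) Set.univ := by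
    intro y _
    simp only [evalEval_eq_sum_range]
    refine Finset.analyticAt_fun_sum _ fun k _ ↦ ?_
    exact (AnalyticOnNhd.eval_polynomial (Q.coeff k) y trivial).mul (by fun_prop)
  have hzero := hana.eq_of_eventuallyEq (fun _ _ ↦ analyticAt_const) hQ
  exact eq_zero_of_eventually_evalEval_eq_zero eval_isLittleO_mul_exp
    (.of_forall fun y ↦ congrFun hzero y)

end Bivariate

section GFour

/-- The coefficient of `x ^ n` in the expansion of `x ↦ g4 (x, y)`. -/
def g4Coeff (y : ℝ) : ℕ → ℝ
  | 0 => 0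
  | k + 1 => (k + 1)! * (y * Real.exp y - y * ∑ j ∈ Finset.range (k + 1), y ^ j / j !)

variable {x y : ℝ}

theorem summable_g4 (hx : |x| < 1) (hy : |y| < 1) :
    Summable fun p : ℕ × ℕ ↦ ((p.1 + 1)! / (p.1 + 1 + p.2)! : ℝ) * x ^ (p.1 + 1) *
      y ^ (p.1 + 1 + p.2 + 1) := by
  have hgeom : Summable fun p : ℕ × ℕ ↦ |x| ^ p.1 * |y| ^ p.2 :=
    (summable_geometric_of_lt_one (abs_nonneg x) hx).mul_of_nonneg
      (summable_geometric_of_lt_one (abs_nonneg y) hy) (fun _ ↦ by positivity)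
      fun _ ↦ by positivity
  refine .of_norm_bounded hgeom fun ⟨k, i⟩ ↦ ?_
  have hratio : ((k + 1)! / (k + 1 + i)! : ℝ) ≤ 1 :=
    div_le_one_of_le₀ (by exact_mod_cast Nat.factorial_le (by lia)) (by positivity)
  have hxpow : |x| ^ (k + 1) ≤ |x| ^ k := pow_le_pow_of_le_one (abs_nonneg x) hx.le (by lia)
  have hypow : |y| ^ (k + 1 + i + 1) ≤ |y| ^ i :=
    pow_le_pow_of_le_one (abs_nonneg y) hy.le (by lia)
  calc ‖((k + 1)! / (k + 1 + i)! : ℝ) * x ^ (k + 1) * y ^ (k + 1 + i + 1)‖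
      = ((k + 1)! / (k + 1 + i)! : ℝ) * |x| ^ (k + 1) * |y| ^ (k + 1 + i + 1) := by simp
    _ ≤ 1 * |x| ^ k * |y| ^ i := by gcongr
    _ = |x| ^ k * |y| ^ i := by rw [one_mul]

theorem hasSum_g4Coeff_succ (x y : ℝ) (k : ℕ) :
    HasSum (fun i : ℕ ↦ ((k + 1)! / (k + 1 + i)! : ℝ) * x ^ (k + 1) * y ^ (k + 1 + i + 1))
      (x ^ (k + 1) * g4Coeff y (k + 1)) := by
  have hexp : HasSum (fun j : ℕ ↦ y ^ j / (j ! : ℝ)) (Real.exp y) := by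
    rw [Real.exp_eq_exp_ℝ]
    exact NormedSpace.expSeries_div_hasSum_exp y
  have htail := ((hasSum_nat_add_iff' (k + 1)).mpr hexp).mul_left (x ^ (k + 1) * (k + 1)! * y)
  convert! htail using 1
  · ext i
    rw [add_comm i]
    ring
  · rw [g4Coeff]
    ring

theorem hasSum_g4 (hx : |x| < 1) (hy : |y| < 1) :
    HasSum (fun n ↦ x ^ n * g4Coeff y n) (g4 (x, y)) := by
  have hsucc : HasSum (fun k ↦ x ^ (k + 1) * g4Coeff y (k + 1)) (g4 (x, y)) :=
    (summable_g4 hx hy).hasSum.prod_fiberwise (hasSum_g4Coeff_succ x y)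
  simpa [g4Coeff] using (hasSum_nat_add_iff (f := fun n ↦ x ^ n * g4Coeff y n) 1).mp hsucc

theorem hasFPowerSeriesAt_g4 (hy : |y| < 1) :
    HasFPowerSeriesAt (fun x ↦ g4 (x, y)) (.ofScalars ℝ (g4Coeff y)) 0 := by
  rw [hasFPowerSeriesAt_iff]
  filter_upwards [eventually_abs_sub_lt 0 one_pos] with x hx
  simpa using hasSum_g4 (by simpa using hx) hy

end GFour

section ExpCurve

/-- The curve `y ↦ (1, y, y e^y)` of directions such that the first three components of `fmap` and
`gmap` at `(x, y)` are `x • expCurve y`. -/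
def expCurve (y : ℝ) : ℝ × ℝ × ℝ :=
  (1, y, y * Real.exp y)

theorem apply_diagonal_eq_factorial_of_eventually_eq_g4Coeff {ι : Type*} [Finite ι] {n : ℕ}
    {M : MultilinearMap ℝ (fun _ : ι ↦ ℝ × ℝ × ℝ) ℝ}
    (hM : ∀ᶠ y in 𝓝 0, M (fun _ ↦ expCurve y) = g4Coeff y (n + 1)) :
    M (fun _ ↦ (1, 0, 1)) = (n + 1)! := by
  obtain ⟨Q, hQ⟩ := exists_evalEval_eq_apply_diagonal M (1, 0, 0) (0, 1, 0) (0, 0, 1)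
  replace hQ (v w : ℝ) : Q.evalEval v w = M fun _ ↦ (1, v, w) := by simpa using hQ v w
  let R : ℝ[X][Y] :=
    CC ((n + 1)! : ℝ) * (Y - C (X * ∑ j ∈ Finset.range (n + 1), C ((j ! : ℝ)⁻¹) * X ^ j))
  have hR (v w : ℝ) : R.evalEval v w =
      (n + 1)! * (w - v * ∑ j ∈ Finset.range (n + 1), v ^ j / j !) := by
    simp [R, evalEval_finsetSum, evalEval_C, div_eq_inv_mul]
  have hQR : Q - R = 0 := by
    refine eq_zero_of_eventually_evalEval_mul_exp_eq_zero ?_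
    filter_upwards [hM] with y hy
    rw [evalEval_sub, hQ, hR, sub_eq_zero]
    exact hy
  rw [← hQ, sub_eq_zero.mp hQR, hR]
  simp

theorem not_eventually_apply_smul_expCurve_eq_g4 {F : ℝ × ℝ × ℝ → ℝ} (hF : AnalyticAt ℝ F 0) :
    ¬ ∀ᶠ y in 𝓝 0, ∀ᶠ x in 𝓝 0, F (x • expCurve y) = g4 (x, y) := by
  intro hFg
  obtain ⟨p, hp⟩ := hF
  have hcoeff (n : ℕ) : ∀ᶠ y in 𝓝 0, p n (fun _ ↦ expCurve y) = g4Coeff y n := by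
    filter_upwards [hFg, eventually_abs_sub_lt 0 one_pos] with y hy hy1
    have hg := (hasFPowerSeriesAt_g4 (by simpa using hy1)).congr (hy.mono fun _ ↦ Eq.symm)
    simpa using apply_diagonal_eq_coeff_of_hasFPowerSeriesAt_smul hp hg n
  have hlt := eventually_norm_apply_diagonal_lt_factorial hp.radius_pos (1, 0, 1)
  obtain ⟨n, hn⟩ := ((tendsto_add_atTop_nat 1).eventually hlt).exists
  have hfact : p (n + 1) (fun _ ↦ (1, 0, 1)) = (n + 1)! :=
    apply_diagonal_eq_factorial_of_eventually_eq_g4Coeff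
      (M := (p (n + 1)).toMultilinearMap) (hcoeff (n + 1))
  simp [hfact] at hn

end ExpCurve

section Hypersurface

theorem gmap_zero_left (y : ℝ) : gmap (0, y) = 0 := by
  simp [gmap, g4]

theorem hasDerivAt_gmap {y : ℝ} (hy : |y| < 1) :
    HasDerivAt (fun x ↦ gmap (x, y)) (1, y, y * Real.exp y, y * Real.exp y - y) 0 := by
  have hg4 : HasDerivAt (fun x ↦ g4 (x, y)) (y * Real.exp y - y) 0 := by
    simpa [g4Coeff] using (hasFPowerSeriesAt_g4 hy).hasDerivAt
  have hid := hasDerivAt_id (0 : ℝ)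
  refine hid.prodMk (.prodMk ?_ (.prodMk ?_ hg4))
  · simpa using hid.mul_const y
  · simpa [mul_assoc] using hid.mul_const (y * Real.exp y)

theorem eventually_fderiv_apply_eq_zero {h : ℝ × ℝ × ℝ × ℝ → ℝ} (hh : DifferentiableAt ℝ h 0)
    (hg : ∀ᶠ y in 𝓝 0, ∀ᶠ x in 𝓝 0, h (gmap (x, y)) = 0) :
    ∀ᶠ y in 𝓝 0, fderiv ℝ h 0 (1, y, y * Real.exp y, y * Real.exp y - y) = 0 := by
  filter_upwards [hg, eventually_abs_sub_lt 0 one_pos] with y hy hy1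
  have hh' : HasFDerivAt h (fderiv ℝ h 0) (gmap (0, y)) := by
    simpa only [gmap_zero_left] using hh.hasFDerivAt
  exact (hh'.comp_hasDerivAt 0 (hasDerivAt_gmap (by simpa using hy1))).unique
    ((hasDerivAt_const 0 0).congr_of_eventuallyEq hy)

theorem apply_last_ne_zero_of_eventually_apply_eq_zero {L : ℝ × ℝ × ℝ × ℝ →L[ℝ] ℝ} (hL : L ≠ 0)
    (hLg : ∀ᶠ y in 𝓝 0, L (1, y, y * Real.exp y, y * Real.exp y - y) = 0) :
    L (0, 0, 0, 1) ≠ 0 := by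
  intro hd
  obtain ⟨a, b, c, hLabc⟩ : ∃ a b c : ℝ, ∀ x₁ x₂ x₃ x₄,
      L (x₁, x₂, x₃, x₄) = a * x₁ + b * x₂ + c * x₃ := by
    refine ⟨L (1, 0, 0, 0), L (0, 1, 0, 0), L (0, 0, 1, 0), fun x₁ x₂ x₃ x₄ ↦ ?_⟩
    have hsum : (x₁, x₂, x₃, x₄) = x₁ • (1, 0, 0, 0) + x₂ • (0, 1, 0, 0) + x₃ • (0, 0, 1, 0) +
        x₄ • ((0, 0, 0, 1) : ℝ × ℝ × ℝ × ℝ) := by simp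
    rw [hsum]
    simp only [map_add, map_smul, hd, smul_eq_mul, mul_zero, add_zero, mul_comm]
  have hzero : C (C a + C b * X) + CC c * Y = (0 : ℝ[X][Y]) := by
    refine eq_zero_of_eventually_evalEval_mul_exp_eq_zero (hLg.mono fun y hy ↦ ?_)
    rw [hLabc] at hy
    simpa [evalEval_C] using hy
  have hc : c = 0 := by simpa using congr(($hzero).coeff 1)
  have hab : C a + C b * X = 0 := by simpa using congr(($hzero).coeff 0)
  have ha : a = 0 := by simpa using congr(($hab).coeff 0)
  have hb : b = 0 := by simpa using congr(($hab).coeff 1)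
  exact hL (ContinuousLinearMap.ext fun z ↦ by simp [hLabc z.1 z.2.1 z.2.2.1 z.2.2.2, ha, hb, hc])

theorem exists_analyticAt_eventually_eq_last_of_fderiv_ne_zero {h : ℝ × ℝ × ℝ × ℝ → ℝ}
    (hh : AnalyticAt ℝ h 0) (hne : fderiv ℝ h 0 (0, 0, 0, 1) ≠ 0) :
    ∃ F : ℝ × ℝ × ℝ → ℝ, AnalyticAt ℝ F 0 ∧
      ∀ᶠ z in 𝓝 0, h z = h 0 → F (z.1, z.2.1, z.2.2.1) = z.2.2.2 := by
  let e : ((ℝ × ℝ × ℝ) × ℝ) ≃L[ℝ] ℝ × ℝ × ℝ × ℝ :=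
    (ContinuousLinearEquiv.prodAssoc ℝ ℝ (ℝ × ℝ) ℝ).trans
      (.prodCongr (.refl ℝ ℝ) (.prodAssoc ℝ ℝ ℝ ℝ))
  have hhe : AnalyticAt ℝ (h ∘ e) 0 :=
    AnalyticAt.comp (by simpa using hh) (e.toContinuousLinearMap.analyticAt 0)
  have hfd : fderiv ℝ (h ∘ e) 0 (0, 1) ≠ 0 := by
    rw [e.comp_right_fderiv, map_zero]
    exact hne
  obtain ⟨F, hF, hFe⟩ := exists_analyticAt_eventually_eq_of_fderiv_ne_zero hhe hfd
  refine ⟨F, hF, ?_⟩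
  filter_upwards [(e.symm.continuous.tendsto' 0 0 (map_zero _)).eventually hFe] with z hz
  simp only [Function.comp_apply, e.apply_symm_apply, map_zero] at hz
  exact hz

theorem not_eventually_apply_gmap_eq_zero {h : ℝ × ℝ × ℝ × ℝ → ℝ} (hh : AnalyticAt ℝ h 0)
    (hne : fderiv ℝ h 0 ≠ 0) : ¬ ∀ᶠ z in 𝓝 0, h (gmap z) = 0 := by
  intro hg
  have hcurry : ∀ᶠ y in 𝓝 0, ∀ᶠ x in 𝓝 0, h (gmap (x, y)) = 0 := by
    have hswap := (continuous_swap.tendsto' (0 : ℝ × ℝ) 0 rfl).eventually hg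
    exact (nhds_prod_eq (x := (0 : ℝ)) (y := (0 : ℝ)) ▸ hswap).curry
  have hlast := apply_last_ne_zero_of_eventually_apply_eq_zero hne
    (eventually_fderiv_apply_eq_zero hh.differentiableAt hcurry)
  obtain ⟨F, hF, hFh⟩ := exists_analyticAt_eventually_eq_last_of_fderiv_ne_zero hh hlast
  have hh0 : h 0 = 0 := by simpa [gmap_zero_left] using hcurry.self_of_nhds.self_of_nhds
  refine not_eventually_apply_smul_expCurve_eq_g4 hF ?_
  filter_upwards [hcurry, eventually_abs_sub_lt 0 one_pos] with y hy hy1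
  have hgmap : Tendsto (fun x ↦ gmap (x, y)) (𝓝 0) (𝓝 0) := by
    simpa [gmap_zero_left] using (hasDerivAt_gmap (by simpa using hy1)).continuousAt.tendsto
  filter_upwards [hy, hgmap.eventually hFh] with x hx hFx
  simpa [gmap, expCurve, mul_assoc] using hFx (hx.trans hh0.symm)

end Hypersurface

theorem fmap_gmap_not_analytically_RL_equivalent_general {τ : ℝ × ℝ → ℝ × ℝ}
    {π : ℝ × ℝ × ℝ × ℝ → ℝ × ℝ × ℝ × ℝ} (hτ : 𝓝 0 ≤ map τ (𝓝 0)) (hπ : AnalyticAt ℝ π 0)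
    (hπ0 : π 0 = 0) {D : (ℝ × ℝ × ℝ × ℝ) ≃L[ℝ] ℝ × ℝ × ℝ × ℝ}
    (hD : HasFDerivAt π (D : (ℝ × ℝ × ℝ × ℝ) →L[ℝ] ℝ × ℝ × ℝ × ℝ) 0) :
    ¬ ∀ᶠ x in 𝓝 0, π (fmap x) = gmap (τ x) := by
  intro heq
  let ℓ : ℝ × ℝ × ℝ × ℝ →L[ℝ] ℝ := .snd ℝ ℝ ℝ ∘L .snd ℝ ℝ (ℝ × ℝ) ∘L .snd ℝ ℝ (ℝ × ℝ × ℝ)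
  have hℓ : ℓ ≠ 0 := fun hzero ↦ by simpa [ℓ] using congr($hzero (0, 0, 0, 1))
  have hf : Tendsto fmap (𝓝 0) (𝓝 0) := by
    have hcont : Continuous fmap := by unfold fmap; fun_prop
    exact hcont.tendsto' 0 0 (by simp [fmap])
  obtain ⟨h, hh, hne, hg⟩ := exists_analyticAt_eventually_apply_eq_zero hℓ
    (.of_forall fun _ ↦ by simp [ℓ, fmap]) hf hτ hπ hD heq
  rw [hπ0] at hh hne
  exact not_eventually_apply_gmap_eq_zero hh hne hg

/-- `f` and `g` are not analytically R-L equivalent: there are no germs $τ$, $π$, real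
analytic at $0$, vanishing at $0$, with invertible derivatives at $0$, such that
$π ∘ f = g ∘ τ$ near $0$. -/
theorem fmap_gmap_not_analytically_RL_equivalent :
    ¬ ∃ (τ : ℝ × ℝ → ℝ × ℝ) (π : ℝ × ℝ × ℝ × ℝ → ℝ × ℝ × ℝ × ℝ),
      AnalyticAt ℝ τ 0 ∧ τ 0 = 0 ∧
      (∃ Dτ : (ℝ × ℝ) ≃L[ℝ] ℝ × ℝ,
        HasFDerivAt τ (Dτ : (ℝ × ℝ) →L[ℝ] ℝ × ℝ) 0) ∧
      AnalyticAt ℝ π 0 ∧ π 0 = 0 ∧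
      (∃ Dπ : (ℝ × ℝ × ℝ × ℝ) ≃L[ℝ] ℝ × ℝ × ℝ × ℝ,
        HasFDerivAt π (Dπ : (ℝ × ℝ × ℝ × ℝ) →L[ℝ] ℝ × ℝ × ℝ × ℝ) 0) ∧
      ∀ᶠ x : ℝ × ℝ in 𝓝 0, π (fmap x) = gmap (τ x) := by
  rintro ⟨τ, π, hτ, hτ0, ⟨Dτ, hDτ⟩, hπ, hπ0, ⟨Dπ, hDπ⟩, heq⟩
  have hopen : map τ (𝓝 0) = 𝓝 0 := by
    have hs := hτ.hasStrictFDerivAt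
    rw [hDτ.fderiv] at hs
    simpa [hτ0] using hs.map_nhds_eq_of_equiv
  exact fmap_gmap_not_analytically_RL_equivalent_general hopen.ge hπ hπ0 hDπ heq
end
end

section
/- There exist two real analytic map germs f, g : (ℝ²,0) → (ℝ⁴,0) that are C^∞ R-L equivalent but not analytically R-L equivalent. -/
open scoped Topology

/-!
Write `J(x, y) = ∫₀^y e^{y-t} φ(x t) dt` with `φ(u) = 1 / (1 + u²)`, and compare the germs
`f = (x J, x, x y, x e^y)` and `g = (0, x, x y, x e^y)`. They are equivalent as soon as `x J` is a
function `H` of `(X, Y, Z) = (x, x y, x e^y)`, by subtracting `H` from the first coordinate.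

With `T(x, b) = ∫₀^∞ e^{-s} φ(b + x s) ds` one has `J(x, y) = e^y T(x, 0) - T(x, x y)`, so
`H = Z T(X, 0) - X T(X, Y)` works and is smooth.

Conversely, an analytic equivalence gives, by the implicit function theorem and the linear
independence of `1, y, e^y`, an analytic `K` with `x J = K(x, x y, x e^y)` near `0`. Both sides
continue analytically in `y` from `0` down to `-β / x`, where `e^y` is flat in `x`; hence
`-K(x, -β, 0)` has the asymptotic expansion `∑ φ⁽ⁿ⁾(-β) xⁿ⁺¹` of `x T(x, -β)` as `x → 0⁺`. So this
series converges, and the Taylor series of `φ` at `-β` has infinite radius of convergence, which is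
false.
-/

open MeasureTheory Set Filter Asymptotics
open scoped ContDiff

section BoundedDerivs

/-- Smooth functions on the line all of whose derivatives (including the function) are bounded;
the class of kernels for which the integral transforms below may be differentiated freely. -/
def HasBoundedDerivs (φ : ℝ → ℝ) : Prop :=
  ContDiff ℝ ∞ φ ∧ ∀ n, ∃ C, ∀ u, |iteratedDeriv n φ u| ≤ C

variable {φ : ℝ → ℝ}

protected lemma HasBoundedDerivs.deriv (hφ : HasBoundedDerivs φ) : HasBoundedDerivs (deriv φ) :=
  ⟨(contDiff_infty_iff_deriv.1 hφ.1).2, fun n ↦ by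
    simpa only [iteratedDeriv_succ'] using hφ.2 (n + 1)⟩

protected lemma HasBoundedDerivs.iteratedDeriv (hφ : HasBoundedDerivs φ) :
    ∀ n, HasBoundedDerivs (iteratedDeriv n φ)
  | 0 => by simpa only [iteratedDeriv_zero] using hφ
  | n + 1 => by simpa only [iteratedDeriv_succ] using (hφ.iteratedDeriv n).deriv

protected lemma HasBoundedDerivs.continuous (hφ : HasBoundedDerivs φ) : Continuous φ :=
  hφ.1.continuous

protected lemma HasBoundedDerivs.differentiable (hφ : HasBoundedDerivs φ) : Differentiable ℝ φ :=
  hφ.1.differentiable (by simp)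

lemma HasBoundedDerivs.exists_bound (hφ : HasBoundedDerivs φ) : ∃ C, ∀ u, ‖φ u‖ ≤ C := by
  simpa using hφ.2 0

variable {μ : Measure ℝ} {w : ℝ → ℝ}

lemma HasBoundedDerivs.integrable_mul_comp_affine (hφ : HasBoundedDerivs φ) (hw : Integrable w μ)
    (x b : ℝ) : Integrable (fun s ↦ w s * φ (b + x * s)) μ := by
  obtain ⟨C, hC⟩ := hφ.exists_bound
  have hcont : Continuous fun s ↦ φ (b + x * s) := hφ.continuous.comp (by fun_prop)
  exact hw.mul_bdd hcont.aestronglyMeasurable (.of_forall fun s ↦ hC _)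

lemma hasFDerivAt_mul_comp_affine (hφ : Differentiable ℝ φ) (c s : ℝ) (p : ℝ × ℝ) :
    HasFDerivAt (fun p : ℝ × ℝ ↦ c * φ (p.2 + p.1 * s))
      ((s * c * deriv φ (p.2 + p.1 * s)) • ContinuousLinearMap.fst ℝ ℝ ℝ +
        (c * deriv φ (p.2 + p.1 * s)) • ContinuousLinearMap.snd ℝ ℝ ℝ) p := by
  have affine : HasFDerivAt (fun p : ℝ × ℝ ↦ p.2 + p.1 * s)
      (ContinuousLinearMap.snd ℝ ℝ ℝ + s • ContinuousLinearMap.fst ℝ ℝ ℝ) p :=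
    hasFDerivAt_snd.add (hasFDerivAt_fst.mul_const s)
  refine (((hφ _).hasDerivAt.comp_hasFDerivAt p affine).const_mul c).congr_fderiv ?_
  module

lemma HasBoundedDerivs.hasFDerivAt_integral_mul_comp_affine (hφ : HasBoundedDerivs φ)
    (hw : Integrable w μ) (hsw : Integrable (fun s ↦ s * w s) μ) (p : ℝ × ℝ) :
    HasFDerivAt (fun p : ℝ × ℝ ↦ ∫ s, w s * φ (p.2 + p.1 * s) ∂μ)
      ((∫ s, s * w s * deriv φ (p.2 + p.1 * s) ∂μ) • ContinuousLinearMap.fst ℝ ℝ ℝ +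
        (∫ s, w s * deriv φ (p.2 + p.1 * s) ∂μ) • ContinuousLinearMap.snd ℝ ℝ ℝ) p := by
  obtain ⟨C, hC⟩ := hφ.deriv.exists_bound
  let F' (q : ℝ × ℝ) (s : ℝ) : ℝ × ℝ →L[ℝ] ℝ :=
    (s * w s * deriv φ (q.2 + q.1 * s)) • ContinuousLinearMap.fst ℝ ℝ ℝ +
      (w s * deriv φ (q.2 + q.1 * s)) • ContinuousLinearMap.snd ℝ ℝ ℝ
  have int_fst := (hφ.deriv.integrable_mul_comp_affine hsw p.1 p.2).smul_const
    (ContinuousLinearMap.fst ℝ ℝ ℝ)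
  have int_snd := (hφ.deriv.integrable_mul_comp_affine hw p.1 p.2).smul_const
    (ContinuousLinearMap.snd ℝ ℝ ℝ)
  have int_deriv : Integrable (F' p) μ := int_fst.add int_snd
  have norm_smul_le {c d : ℝ} {l : ℝ × ℝ →L[ℝ] ℝ} (hl : ‖l‖ ≤ 1) :
      ‖(c * deriv φ d) • l‖ ≤ ‖c‖ * C := by
    rw [norm_smul, norm_mul]
    exact (mul_le_of_le_one_right (by positivity) hl).trans (by gcongr; exact hC d)
  have norm_deriv_le (s : ℝ) (q : ℝ × ℝ) : ‖F' q s‖ ≤ ‖s * w s‖ * C + ‖w s‖ * C :=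
    norm_add_le_of_le (norm_smul_le (ContinuousLinearMap.norm_fst_le ..))
      (norm_smul_le (ContinuousLinearMap.norm_snd_le ..))
  have integral_deriv := integral_add int_fst int_snd
  rw [integral_smul_const, integral_smul_const] at integral_deriv
  rw [← integral_deriv]
  exact hasFDerivAt_integral_of_dominated_of_fderiv_le (F' := F') univ_mem
    (.of_forall fun q ↦ (hφ.integrable_mul_comp_affine hw q.1 q.2).aestronglyMeasurable)
    (hφ.integrable_mul_comp_affine hw p.1 p.2) int_deriv.aestronglyMeasurable
    (.of_forall fun s q _ ↦ norm_deriv_le s q)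
    ((hsw.norm.mul_const C).add (hw.norm.mul_const C))
    (.of_forall fun s q _ ↦ hasFDerivAt_mul_comp_affine hφ.differentiable (w s) s q)

lemma HasBoundedDerivs.contDiff_integral_mul_comp_affine (hφ : HasBoundedDerivs φ)
    (hw : ∀ k : ℕ, Integrable (fun s ↦ s ^ k * w s) μ) :
    ContDiff ℝ ∞ (fun p : ℝ × ℝ ↦ ∫ s, w s * φ (p.2 + p.1 * s) ∂μ) := by
  refine contDiff_infty.2 fun n ↦ ?_
  induction n generalizing φ w with
  | zero =>
    have hdiff := hφ.hasFDerivAt_integral_mul_comp_affine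
      (by simpa using hw 0) (by simpa using hw 1)
    exact contDiff_zero.2 (continuous_iff_continuousAt.2 fun p ↦ (hdiff p).continuousAt)
  | succ n ih =>
    have hdiff := hφ.hasFDerivAt_integral_mul_comp_affine
      (by simpa using hw 0) (by simpa using hw 1)
    refine contDiff_succ_iff_hasFDerivAt.2 ⟨_, ?_, hdiff⟩
    have hsw (k : ℕ) : Integrable (fun s ↦ s ^ k * (s * w s)) μ := by
      simpa only [pow_succ, mul_assoc] using hw (k + 1)
    exact ((ih hφ.deriv hsw).smul contDiff_const).add ((ih hφ.deriv hw).smul contDiff_const)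

end BoundedDerivs

section ExpTransform

/-- The transform `(x, b) ↦ ∫₀^∞ e^{-s} φ(b + x s) ds`, the Borel-Laplace sum of the
(in general divergent) series `∑ φ⁽ⁿ⁾(b) xⁿ`. -/
noncomputable def expTransform (φ : ℝ → ℝ) (p : ℝ × ℝ) : ℝ :=
  ∫ s in Ioi (0 : ℝ), Real.exp (-s) * φ (p.2 + p.1 * s)

variable {φ : ℝ → ℝ}

lemma integrableOn_pow_mul_exp_neg_Ioi (k : ℕ) :
    IntegrableOn (fun s : ℝ ↦ s ^ k * Real.exp (-s)) (Ioi 0) := by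
  have h := Real.GammaIntegral_convergent (s := k + 1) (by positivity)
  simpa [mul_comm] using h

lemma HasBoundedDerivs.contDiff_expTransform (hφ : HasBoundedDerivs φ) :
    ContDiff ℝ ∞ (expTransform φ) :=
  hφ.contDiff_integral_mul_comp_affine integrableOn_pow_mul_exp_neg_Ioi

lemma abs_expTransform_le {C : ℝ} (hC : ∀ u, |φ u| ≤ C) (p : ℝ × ℝ) : |expTransform φ p| ≤ C := by
  have hint : IntegrableOn (fun s : ℝ ↦ Real.exp (-s) * C) (Ioi 0) :=
    (integrableOn_exp_neg_Ioi 0).mul_const C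
  calc |expTransform φ p| ≤ ∫ s in Ioi (0 : ℝ), Real.exp (-s) * C :=
        norm_integral_le_of_norm_le (f := fun s ↦ Real.exp (-s) * φ (p.2 + p.1 * s)) hint
          (.of_forall fun s ↦ by
          rw [norm_mul, Real.norm_of_nonneg (Real.exp_pos _).le]
          gcongr
          exact hC _)
    _ = C := by rw [integral_mul_const, integral_exp_neg_Ioi_zero, one_mul]

lemma HasBoundedDerivs.expTransform_eq_add (hφ : HasBoundedDerivs φ) (x b : ℝ) :
    expTransform φ (x, b) = φ b + x * expTransform (deriv φ) (x, b) := by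
  have hexp : IntegrableOn (fun s : ℝ ↦ Real.exp (-s)) (Ioi 0) := integrableOn_exp_neg_Ioi 0
  have int_φ := hφ.integrable_mul_comp_affine hexp x b
  have int_deriv := hφ.deriv.integrable_mul_comp_affine hexp x b
  have deriv_product (s : ℝ) : HasDerivAt (fun s ↦ -(Real.exp (-s) * φ (b + x * s)))
      (Real.exp (-s) * φ (b + x * s) - x * (Real.exp (-s) * deriv φ (b + x * s))) s := by
    have affine : HasDerivAt (fun s ↦ b + x * s) x s := by
      simpa using ((hasDerivAt_id s).const_mul x).const_add b
    have kernel := (hφ.differentiable (b + x * s)).hasDerivAt.comp s affine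
    convert! ((hasDerivAt_neg s).exp.mul kernel).neg using 1
    simp only [Function.comp_apply]
    ring
  have decay : Tendsto (fun s ↦ -(Real.exp (-s) * φ (b + x * s))) atTop (𝓝 0) := by
    obtain ⟨C, hC⟩ := hφ.exists_bound
    have hbdd : IsBoundedUnder (· ≤ ·) atTop (norm ∘ fun s ↦ φ (b + x * s)) :=
      isBoundedUnder_of ⟨C, fun s ↦ hC _⟩
    simpa using (Real.tendsto_exp_neg_atTop_nhds_zero.zero_mul_isBoundedUnder_le hbdd).neg
  have ftc := integral_Ioi_of_hasDerivAt_of_tendsto' (a := 0) (fun s _ ↦ deriv_product s)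
    (int_φ.sub (int_deriv.const_mul x)) decay
  rw [integral_sub int_φ (int_deriv.const_mul x), integral_const_mul] at ftc
  simp only [expTransform]
  simp only [neg_zero, Real.exp_zero, mul_zero, add_zero, one_mul, sub_neg_eq_add, zero_add] at ftc
  linarith

lemma HasBoundedDerivs.expTransform_eq_sum_add (hφ : HasBoundedDerivs φ) (x b : ℝ) (N : ℕ) :
    expTransform φ (x, b) = ∑ n ∈ Finset.range N, iteratedDeriv n φ b * x ^ n +
      x ^ N * expTransform (iteratedDeriv N φ) (x, b) := by
  induction N with
  | zero => simp
  | succ N ih =>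
    rw [ih, (hφ.iteratedDeriv N).expTransform_eq_add, Finset.sum_range_succ, iteratedDeriv_succ]
    ring

/-- The solution `y ↦ ∫₀^y e^{y-t} φ(x t) dt` of `∂J/∂y = J + φ(x y)` vanishing at `y = 0`. -/
noncomputable def expPrimitive (φ : ℝ → ℝ) (p : ℝ × ℝ) : ℝ :=
  ∫ t in (0 : ℝ)..p.2, Real.exp (p.2 - t) * φ (p.1 * t)

lemma setIntegral_Ioi_exp_sub_mul (φ : ℝ → ℝ) (x y c : ℝ) :
    ∫ t in Ioi c, Real.exp (y - t) * φ (x * t) =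
      Real.exp (y - c) * expTransform φ (x, x * c) := by
  have shift := (measurePreserving_add_left volume c).setIntegral_preimage_emb
    (measurableEmbedding_addLeft c) (fun t ↦ Real.exp (y - t) * φ (x * t)) (Ioi c)
  simp only [preimage_const_add_Ioi, sub_self] at shift
  rw [← shift, expTransform, ← integral_const_mul]
  congr with s
  rw [← mul_assoc, ← Real.exp_add, mul_add]
  ring_nf

lemma HasBoundedDerivs.expPrimitive_eq (hφ : HasBoundedDerivs φ) (x y : ℝ) :
    expPrimitive φ (x, y) =
      Real.exp y * expTransform φ (x, 0) - expTransform φ (x, x * y) := by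
  have hint (c : ℝ) : IntegrableOn (fun t ↦ Real.exp (y - t) * φ (x * t)) (Ioi c) := by
    have hexp : IntegrableOn (fun t ↦ Real.exp (y - t)) (Ioi c) := by
      simpa only [IntegrableOn, sub_eq_add_neg, Real.exp_add] using
        (integrableOn_exp_neg_Ioi c).const_mul (Real.exp y)
    simpa only [IntegrableOn, zero_add] using hφ.integrable_mul_comp_affine hexp x 0
  rw [expPrimitive, ← intervalIntegral.integral_Ioi_sub_Ioi' (hint 0) (hint y),
    setIntegral_Ioi_exp_sub_mul, setIntegral_Ioi_exp_sub_mul]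
  simp

end ExpTransform

section AnalyticIntegral

variable {X : Type*} [TopologicalSpace X]

lemma analyticAt_integral_of_continuousMap {E : Type*} [NormedAddCommGroup E] [NormedSpace ℝ E]
    [CompactSpace X] [MeasurableSpace X] [BorelSpace X] {μ : Measure X} [IsFiniteMeasure μ]
    {Φ : E → C(X, ℝ)} {p : E} (hΦ : AnalyticAt ℝ Φ p) :
    AnalyticAt ℝ (fun q ↦ ∫ u, Φ q u ∂μ) p := by
  let integral : C(X, ℝ) →L[ℝ] ℝ := (L1.integralCLM (E := ℝ)).comp (ContinuousMap.toLp 1 μ ℝ)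
  have integral_apply (h : C(X, ℝ)) : integral h = ∫ u, h u ∂μ := by
    rw [ContinuousLinearMap.comp_apply, ← L1.integral_eq, L1.integral_eq_integral]
    exact integral_congr_ae (ContinuousMap.coeFn_toLp μ h)
  simpa only [Function.comp_def, integral_apply] using (integral.analyticAt (Φ p)).comp hΦ

lemma continuousMap_exp_apply [CompactSpace X] (h : C(X, ℝ)) (u : X) :
    NormedSpace.exp h u = Real.exp (h u) := by
  rw [Real.exp_eq_exp_ℝ]
  exact NormedSpace.map_exp (ContinuousMap.evalAlgHom ℝ ℝ u) (continuous_eval_const u) h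

lemma continuousMap_ringInverse_apply {h : C(X, ℝ)} (hh : IsUnit h) (u : X) :
    Ring.inverse h u = (h u)⁻¹ :=
  eq_inv_of_mul_eq_one_left (DFunLike.congr_fun (Ring.inverse_mul_cancel h hh) u)

lemma expPrimitive_eq_mul_integral_unitInterval (φ : ℝ → ℝ) (p : ℝ × ℝ) :
    expPrimitive φ p =
      p.2 * ∫ u : unitInterval, Real.exp (p.2 * (1 - u)) * φ (p.1 * p.2 * u) := by
  have rescale := intervalIntegral.smul_integral_comp_mul_left (a := 0) (b := 1)
    (fun t ↦ Real.exp (p.2 - t) * φ (p.1 * t)) p.2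
  rw [mul_zero, mul_one] at rescale
  rw [expPrimitive, ← rescale, smul_eq_mul, intervalIntegral.integral_of_le zero_le_one,
    ← integral_Icc_eq_integral_Ioc, ← integral_subtype measurableSet_Icc]
  simp only [mul_sub, mul_one, mul_assoc]

end AnalyticIntegral

section Lorentzian

/-- The kernel `1 / (1 + u²)`: all its derivatives are bounded on the line, yet none of its Taylor
series has infinite radius of convergence. -/
noncomputable def lorentzian (u : ℝ) : ℝ := (1 + u ^ 2)⁻¹

lemma analyticAt_expPrimitive_lorentzian (p : ℝ × ℝ) :
    AnalyticAt ℝ (expPrimitive lorentzian) p := by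
  let id : C(unitInterval, ℝ) := ⟨Subtype.val, continuous_subtype_val⟩
  have isUnit_denom (c : ℝ) : IsUnit (1 + (c • id) ^ 2) :=
    (ContinuousMap.isUnit_iff_forall_ne_zero _).2 fun u ↦ (by positivity : 1 + (c * u : ℝ) ^ 2 ≠ 0)
  have analytic_exp : AnalyticAt ℝ (fun q : ℝ × ℝ ↦ NormedSpace.exp (q.2 • (1 - id))) p :=
    (NormedSpace.exp_analytic _).comp (analyticAt_snd.smul analyticAt_const)
  have analytic_denom : AnalyticAt ℝ (fun q : ℝ × ℝ ↦ 1 + ((q.1 * q.2) • id) ^ 2) p :=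
    analyticAt_const.add (((analyticAt_fst.mul analyticAt_snd).smul analyticAt_const).pow 2)
  have analytic_kernel :
      AnalyticAt ℝ (fun q : ℝ × ℝ ↦ Ring.inverse (1 + ((q.1 * q.2) • id) ^ 2)) p :=
    (analyticOnNhd_inverse _ (isUnit_denom (p.1 * p.2))).comp_of_eq analytic_denom rfl
  have analytic_integral := analyticAt_integral_of_continuousMap (μ := volume)
    (analytic_exp.mul analytic_kernel)
  convert! analyticAt_snd.mul analytic_integral using 1
  ext q
  simp only [expPrimitive_eq_mul_integral_unitInterval, Pi.mul_apply, ContinuousMap.mul_apply,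
    continuousMap_exp_apply, continuousMap_ringInverse_apply (isUnit_denom _)]
  rfl

lemma contDiff_lorentzian : ContDiff ℝ ∞ lorentzian :=
  (contDiff_const.add (contDiff_id.pow 2)).inv fun u ↦ by positivity

lemma hasDerivAt_iteratedDeriv_lorentzian (n : ℕ) (u : ℝ) :
    HasDerivAt (iteratedDeriv n lorentzian) (iteratedDeriv (n + 1) lorentzian u) u := by
  rw [iteratedDeriv_succ]
  exact (contDiff_lorentzian.differentiable_iteratedDeriv n
    (by exact_mod_cast WithTop.coe_lt_top n) u).hasDerivAt

lemma hasDerivAt_one_add_sq (u : ℝ) : HasDerivAt (fun u : ℝ ↦ 1 + u ^ 2) (2 * u) u := by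
  simpa using (hasDerivAt_pow 2 u).const_add 1

lemma one_add_sq_mul_deriv_lorentzian (u : ℝ) :
    (1 + u ^ 2) * iteratedDeriv 1 lorentzian u + 2 * u * lorentzian u = 0 := by
  have mul_eq_one : (fun u ↦ (1 + u ^ 2) * iteratedDeriv 0 lorentzian u) = fun _ ↦ 1 := by
    ext u
    rw [iteratedDeriv_zero, lorentzian, mul_inv_cancel₀ (by positivity)]
  have h := (hasDerivAt_one_add_sq u).mul (hasDerivAt_iteratedDeriv_lorentzian 0 u)
  have := h.unique (mul_eq_one ▸ hasDerivAt_const u (1 : ℝ))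
  rw [iteratedDeriv_zero] at this
  linarith

lemma iteratedDeriv_lorentzian_recurrence (n : ℕ) (u : ℝ) :
    (1 + u ^ 2) * iteratedDeriv (n + 2) lorentzian u +
      2 * (n + 2) * u * iteratedDeriv (n + 1) lorentzian u +
      (n + 2) * (n + 1) * iteratedDeriv n lorentzian u = 0 := by
  induction n generalizing u with
  | zero =>
    have h := ((hasDerivAt_one_add_sq u).mul (hasDerivAt_iteratedDeriv_lorentzian 1 u)).add
      (((hasDerivAt_id u).const_mul 2).mul (hasDerivAt_iteratedDeriv_lorentzian 0 u))
    have h0 := h.unique ((hasDerivAt_const u (0 : ℝ)).congr_of_eventuallyEq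
      (.of_forall fun v ↦ by simpa using one_add_sq_mul_deriv_lorentzian v))
    simp only [zero_add, id_eq, Nat.cast_zero] at h0 ⊢
    linarith
  | succ n ih =>
    have h := (((hasDerivAt_one_add_sq u).mul (hasDerivAt_iteratedDeriv_lorentzian (n + 2) u)).add
      (((hasDerivAt_id u).const_mul (2 * (n + 2 : ℝ))).mul
        (hasDerivAt_iteratedDeriv_lorentzian (n + 1) u))).add
      ((hasDerivAt_iteratedDeriv_lorentzian n u).const_mul ((n + 2) * (n + 1) : ℝ))
    have h0 := h.unique ((hasDerivAt_const u (0 : ℝ)).congr_of_eventuallyEq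
      (.of_forall fun v ↦ by simpa using ih v))
    simp only [id_eq, Nat.cast_add, Nat.cast_one] at h0 ⊢
    linarith

/-- The `n`-th Taylor coefficient of `lorentzian` at `u`. -/
noncomputable def lorentzianCoeff (n : ℕ) (u : ℝ) : ℝ :=
  iteratedDeriv n lorentzian u / n.factorial

lemma lorentzianCoeff_recurrence (n : ℕ) (u : ℝ) :
    (1 + u ^ 2) * lorentzianCoeff (n + 2) u + 2 * u * lorentzianCoeff (n + 1) u +
      lorentzianCoeff n u = 0 := by
  have h := iteratedDeriv_lorentzian_recurrence n u
  simp only [lorentzianCoeff, Nat.factorial_succ, Nat.cast_mul, Nat.cast_add, Nat.cast_one]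
  field_simp
  linear_combination h

lemma two_mul_abs_le_one_add_sq (u : ℝ) : 2 * |u| ≤ 1 + u ^ 2 := by
  simpa using two_mul_le_add_sq 1 |u|

lemma lorentzian_pos (u : ℝ) : 0 < lorentzian u := by
  rw [lorentzian]
  positivity

lemma lorentzian_le_one (u : ℝ) : lorentzian u ≤ 1 :=
  inv_le_one_of_one_le₀ (by nlinarith)

lemma lorentzianCoeff_zero (u : ℝ) : lorentzianCoeff 0 u = lorentzian u := by
  simp [lorentzianCoeff]

lemma lorentzianCoeff_one (u : ℝ) :
    (1 + u ^ 2) * lorentzianCoeff 1 u = -(2 * u * lorentzian u) := by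
  simpa [lorentzianCoeff] using eq_neg_of_add_eq_zero_left (one_add_sq_mul_deriv_lorentzian u)

lemma abs_one_add_sq_mul (u c : ℝ) : |(1 + u ^ 2) * c| = (1 + u ^ 2) * |c| := by
  rw [abs_mul, abs_of_pos (by positivity : 0 < 1 + u ^ 2)]

lemma abs_lorentzianCoeff_one_le (u : ℝ) : |lorentzianCoeff 1 u| ≤ 1 := by
  refine le_of_mul_le_mul_left ?_ (by positivity : 0 < 1 + u ^ 2)
  calc (1 + u ^ 2) * |lorentzianCoeff 1 u| = 2 * |u| * lorentzian u := by
        rw [← abs_one_add_sq_mul, lorentzianCoeff_one, abs_neg, abs_mul, abs_mul, abs_two,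
          abs_of_pos (lorentzian_pos u)]
    _ ≤ (1 + u ^ 2) * 1 := by
        gcongr
        · exact (lorentzian_pos u).le
        · exact two_mul_abs_le_one_add_sq u
        · exact lorentzian_le_one u

lemma abs_lorentzianCoeff_add_two_le (n : ℕ) (u : ℝ) :
    |lorentzianCoeff (n + 2) u| ≤ |lorentzianCoeff (n + 1) u| + |lorentzianCoeff n u| := by
  refine le_of_mul_le_mul_left ?_ (by positivity : 0 < 1 + u ^ 2)
  calc (1 + u ^ 2) * |lorentzianCoeff (n + 2) u|
      = |2 * u * lorentzianCoeff (n + 1) u + lorentzianCoeff n u| := by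
        rw [← abs_one_add_sq_mul, ← abs_neg]
        congr 1
        linear_combination -lorentzianCoeff_recurrence n u
    _ ≤ 2 * |u| * |lorentzianCoeff (n + 1) u| + |lorentzianCoeff n u| := by
        simpa only [abs_mul, abs_two] using
          abs_add_le (2 * u * lorentzianCoeff (n + 1) u) (lorentzianCoeff n u)
    _ ≤ (1 + u ^ 2) * |lorentzianCoeff (n + 1) u| + (1 + u ^ 2) * |lorentzianCoeff n u| := by
        gcongr
        · exact two_mul_abs_le_one_add_sq u
        · exact le_mul_of_one_le_left (abs_nonneg _) (by nlinarith)
    _ = (1 + u ^ 2) * (|lorentzianCoeff (n + 1) u| + |lorentzianCoeff n u|) := by ring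

lemma abs_lorentzianCoeff_le (n : ℕ) (u : ℝ) : |lorentzianCoeff n u| ≤ 2 ^ n := by
  induction n using Nat.twoStepInduction with
  | zero =>
    rw [lorentzianCoeff_zero, abs_of_pos (lorentzian_pos u), pow_zero]
    exact lorentzian_le_one u
  | one => exact (abs_lorentzianCoeff_one_le u).trans (by norm_num)
  | more n ih₀ ih₁ =>
    calc |lorentzianCoeff (n + 2) u| ≤ |lorentzianCoeff (n + 1) u| + |lorentzianCoeff n u| :=
          abs_lorentzianCoeff_add_two_le n u
      _ ≤ 2 ^ (n + 1) + 2 ^ (n + 1) := by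
          gcongr
          exact ih₀.trans (pow_le_pow_right₀ one_le_two n.le_succ)
      _ = 2 ^ (n + 2) := by ring

lemma hasBoundedDerivs_lorentzian : HasBoundedDerivs lorentzian :=
  ⟨contDiff_lorentzian, fun n ↦ ⟨2 ^ n * n.factorial, fun u ↦ by
    have h := abs_lorentzianCoeff_le n u
    rwa [lorentzianCoeff, abs_div, Nat.abs_cast, div_le_iff₀ (by positivity)] at h⟩⟩

lemma lorentzian_le_pow_mul_coeff (n : ℕ) (u : ℝ) :
    lorentzian u ≤
      (2 * (1 + u ^ 2)) ^ n * (|lorentzianCoeff n u| + |lorentzianCoeff (n + 1) u|) := by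
  induction n with
  | zero =>
    rw [pow_zero, one_mul, lorentzianCoeff_zero, abs_of_pos (lorentzian_pos u)]
    exact le_add_of_nonneg_right (abs_nonneg _)
  | succ n ih =>
    have coeff_eq : lorentzianCoeff n u =
        -((1 + u ^ 2) * lorentzianCoeff (n + 2) u + 2 * u * lorentzianCoeff (n + 1) u) := by
      linear_combination lorentzianCoeff_recurrence n u
    have abs_coeff_le : |lorentzianCoeff n u| ≤
        (1 + u ^ 2) * |lorentzianCoeff (n + 2) u| + 2 * |u| * |lorentzianCoeff (n + 1) u| := by
      rw [coeff_eq, abs_neg]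
      refine (abs_add_le _ _).trans_eq ?_
      rw [abs_one_add_sq_mul, abs_mul, abs_mul, abs_two]
    rw [pow_succ, mul_assoc]
    refine ih.trans ?_
    gcongr
    nlinarith [two_mul_abs_le_one_add_sq u, abs_nonneg (lorentzianCoeff (n + 1) u),
      abs_nonneg (lorentzianCoeff (n + 2) u), sq_nonneg u]

lemma not_exists_iteratedDeriv_lorentzian_le (b : ℝ) :
    ¬ ∃ C R : ℝ, ∀ n, |iteratedDeriv n lorentzian b| ≤ C * R ^ n := by
  rintro ⟨C, R, bound⟩
  obtain ⟨A, hA⟩ : ∃ A, A = 2 * (1 + b ^ 2) := ⟨_, rfl⟩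
  have A_pos : 0 < A := by rw [hA]; positivity
  have pow_mul_coeff_le (n : ℕ) : A ^ n * |lorentzianCoeff n b| ≤
      C * ((A * R) ^ n / n.factorial) := by
    calc A ^ n * |lorentzianCoeff n b|
        = A ^ n * (|iteratedDeriv n lorentzian b| / n.factorial) := by
          rw [lorentzianCoeff, abs_div, Nat.abs_cast]
      _ ≤ A ^ n * (C * R ^ n / n.factorial) := by gcongr; exact bound n
      _ = C * ((A * R) ^ n / n.factorial) := by ring
  have tendsto_zero : Tendsto (fun n ↦ A ^ n * |lorentzianCoeff n b|) atTop (𝓝 0) :=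
    squeeze_zero (fun n ↦ by positivity) pow_mul_coeff_le <| by
      simpa using (FloorSemiring.tendsto_pow_div_factorial_atTop (A * R)).const_mul C
  have tendsto_sum : Tendsto (fun n ↦ A ^ n * |lorentzianCoeff n b| +
      A⁻¹ * (A ^ (n + 1) * |lorentzianCoeff (n + 1) b|)) atTop (𝓝 0) := by
    simpa using tendsto_zero.add ((tendsto_zero.comp (tendsto_add_atTop_nat 1)).const_mul A⁻¹)
  refine (lorentzian_pos b).not_ge (ge_of_tendsto' tendsto_sum fun n ↦ ?_)
  refine (lorentzian_le_pow_mul_coeff n b).trans_eq ?_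
  rw [← hA]
  field_simp
  ring

end Lorentzian

section AsymptoticExpansion

lemma eq_zero_of_forall_sum_isBigO_pow {d : ℕ → ℝ}
    (hd : ∀ N, (fun x ↦ ∑ n ∈ Finset.range N, d n * x ^ n) =O[𝓝[>] (0 : ℝ)] (· ^ N)) : d = 0 := by
  funext k
  induction k using Nat.strong_induction_on with
  | _ k ih =>
    have sum_eq (x : ℝ) : ∑ n ∈ Finset.range (k + 1), d n * x ^ n = d k * x ^ k :=
      Finset.sum_eq_single_of_mem k (Finset.self_mem_range_succ k) fun n hn hne ↦ by
        have hlt : n < k := by grind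
        rw [ih n hlt, Pi.zero_apply, zero_mul]
    have divided : (fun _ ↦ d k) =O[𝓝[>] (0 : ℝ)] fun x : ℝ ↦ x := by
      have hd_k := hd (k + 1)
      simp only [sum_eq, pow_succ] at hd_k
      refine (hd_k.mul (isBigO_refl (fun x : ℝ ↦ (x ^ k)⁻¹) _)).congr' ?_ ?_ <;>
      · filter_upwards [self_mem_nhdsWithin] with x (x_pos : 0 < x)
        field_simp
    exact tendsto_nhds_unique tendsto_const_nhds
      (divided.trans_tendsto (tendsto_id.mono_left nhdsWithin_le_nhds))

lemma exists_geometric_bound_of_analyticAt {M : ℝ → ℝ} {a : ℕ → ℝ} (hM : AnalyticAt ℝ M 0)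
    (ha : ∀ N, (fun x ↦ M x - ∑ n ∈ Finset.range N, a n * x ^ n) =O[𝓝[>] 0] (· ^ N)) :
    ∃ C R, ∀ n, |a n| ≤ C * R ^ n := by
  obtain ⟨p, hp⟩ := hM
  have taylor (N : ℕ) :
      (fun x ↦ M x - ∑ n ∈ Finset.range N, p.coeff n * x ^ n) =O[𝓝[>] 0] (· ^ N) := by
    have h := (hp.isBigO_sub_partialSum_pow N).mono (nhdsWithin_le_nhds (s := Ioi 0))
    simp only [← norm_pow, isBigO_norm_right] at h
    simpa [FormalMultilinearSeries.partialSum, mul_comm] using h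
  have coeff_eq : a - p.coeff = 0 := eq_zero_of_forall_sum_isBigO_pow fun N ↦ by
    refine ((taylor N).sub (ha N)).congr_left fun x ↦ ?_
    simp [sub_mul]
  obtain ⟨C, R, -, -, bound⟩ := p.le_mul_pow_of_radius_pos hp.radius_pos
  exact ⟨C, R, fun n ↦ by
    simpa [sub_eq_zero.1 coeff_eq, FormalMultilinearSeries.norm_apply_eq_norm_coef] using bound n⟩

lemma exp_neg_div_isBigO_pow {β : ℝ} (hβ : 0 < β) (N : ℕ) :
    (fun x ↦ Real.exp (-β / x)) =O[𝓝[>] 0] (· ^ N) := by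
  have h := (isLittleO_exp_neg_mul_rpow_atTop hβ (-(N : ℝ))).isBigO.comp_tendsto
    tendsto_inv_nhdsGT_zero
  refine h.congr (fun x ↦ ?_) fun x ↦ ?_ <;> simp [div_eq_mul_inv]

end AsymptoticExpansion

section AnalyticFactorization

/-- An Osgood-type germ `(ℝ², 0) → (ℝ³, 0)`. Its image satisfies no nontrivial analytic equation,
and it maps the hyperbola branch `x y = -β` to within `e^{-β/x}` of the plane `Z = 0`. -/
noncomputable def osgoodMap (p : ℝ × ℝ) : ℝ × ℝ × ℝ := (p.1, p.1 * p.2, p.1 * Real.exp p.2)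

lemma analyticAt_osgoodMap (p : ℝ × ℝ) : AnalyticAt ℝ osgoodMap p :=
  analyticAt_fst.prod ((analyticAt_fst.mul analyticAt_snd).prod
    (analyticAt_fst.mul analyticAt_snd.rexp))

lemma osgoodMap_zero : osgoodMap 0 = 0 := by simp [osgoodMap]

lemma osgoodMap_neg_div {x : ℝ} (hx : x ≠ 0) (β : ℝ) :
    osgoodMap (x, -β / x) = (x, -β, x * Real.exp (-β / x)) := by
  simp only [osgoodMap, mul_div_cancel₀ _ hx]

variable {h : ℝ × ℝ → ℝ} {K : ℝ × ℝ × ℝ → ℝ} {r β : ℝ}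

lemma eventually_eq_comp_osgoodMap_neg_div (hh : ∀ p, AnalyticAt ℝ h p)
    (hK : AnalyticOnNhd ℝ K (Metric.ball 0 r)) (heq : ∀ᶠ p in 𝓝 0, h p = K (osgoodMap p))
    (hβ : 0 < β) (hβr : β < r) :
    ∀ᶠ x in 𝓝[>] 0, h (x, -β / x) = K (osgoodMap (x, -β / x)) := by
  have tendsto_axis : Tendsto (fun x : ℝ ↦ (x, (0 : ℝ))) (𝓝[>] 0) (𝓝 0) :=
    ((Continuous.prodMk_left (0 : ℝ)).tendsto' 0 0 rfl).mono_left nhdsWithin_le_nhds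
  have x_lt : ∀ᶠ x in 𝓝[>] 0, x < r := nhdsWithin_le_nhds (Iio_mem_nhds (hβ.trans hβr))
  filter_upwards [tendsto_axis.eventually heq.eventually_nhds, x_lt, self_mem_nhdsWithin]
    with x eq_near_axis x_lt (x_pos : 0 < x)
  -- The segment is unboundedly long as `x → 0`, but `osgoodMap` keeps it inside the ball.
  have mapsTo_ball : ∀ y ∈ Icc (-β / x) 0, osgoodMap (x, y) ∈ Metric.ball 0 r := by
    rintro y ⟨y_ge, y_le⟩
    have : -β ≤ x * y := by rwa [div_le_iff₀' x_pos] at y_ge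
    have : x * y ≤ 0 := mul_nonpos_of_nonneg_of_nonpos x_pos.le y_le
    have : x * Real.exp y ≤ x := mul_le_of_le_one_right x_pos.le (Real.exp_le_one_iff.2 y_le)
    have : 0 < x * Real.exp y := by positivity
    simp only [osgoodMap, mem_ball_zero_iff, Prod.norm_def, Real.norm_eq_abs, sup_lt_iff, abs_lt]
    refine ⟨⟨?_, ?_⟩, ⟨?_, ?_⟩, ?_, ?_⟩ <;> linarith
  have analytic_line (y : ℝ) : AnalyticAt ℝ (fun y ↦ (x, y)) y :=
    analyticAt_const.prod analyticAt_id
  have analytic_left : AnalyticOnNhd ℝ (fun y ↦ h (x, y)) (Icc (-β / x) 0) := fun y _ ↦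
    (hh (x, y)).comp (analytic_line y)
  have analytic_right : AnalyticOnNhd ℝ (fun y ↦ K (osgoodMap (x, y))) (Icc (-β / x) 0) :=
    fun y hy ↦ (hK _ (mapsTo_ball y hy)).comp_of_eq
      ((analyticAt_osgoodMap (x, y)).comp (analytic_line y)) rfl
  have endpoint_le : -β / x ≤ 0 := div_nonpos_of_nonpos_of_nonneg (by linarith) x_pos.le
  have eq_near_zero : ∀ᶠ y in 𝓝 0, h (x, y) = K (osgoodMap (x, y)) :=
    (Continuous.prodMk_right x).continuousAt.eventually eq_near_axis
  exact analytic_left.eqOn_of_preconnected_of_eventuallyEq analytic_right isPreconnected_Icc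
    (right_mem_Icc.2 endpoint_le) eq_near_zero (left_mem_Icc.2 endpoint_le)

variable {φ : ℝ → ℝ}

lemma zero_neg_zero_mem_ball (hβ : 0 < β) (hβr : β < r) :
    ((0, -β, 0) : ℝ × ℝ × ℝ) ∈ Metric.ball 0 r := by
  simpa [Prod.norm_def, abs_of_pos hβ, hβ.trans hβr] using hβr

lemma sub_mul_expTransform_isBigO_exp (hφ : HasBoundedDerivs φ)
    (hJ : ∀ p, AnalyticAt ℝ (expPrimitive φ) p) (hK : AnalyticOnNhd ℝ K (Metric.ball 0 r))
    (heq : ∀ᶠ p in 𝓝 0, p.1 * expPrimitive φ p = K (osgoodMap p))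
    (hβ : 0 < β) (hβr : β < r) :
    (fun x ↦ -K (x, -β, 0) - x * expTransform φ (x, -β)) =O[𝓝[>] 0]
      fun x ↦ Real.exp (-β / x) := by
  have tendsto_id : Tendsto (fun x : ℝ ↦ x) (𝓝[>] 0) (𝓝 0) := nhdsWithin_le_nhds
  have x_mul_exp : (fun x ↦ x * Real.exp (-β / x)) =O[𝓝[>] 0] fun x ↦ Real.exp (-β / x) := by
    simpa using (tendsto_id.isBigO_one ℝ).mul (isBigO_refl (fun x ↦ Real.exp (-β / x)) _)
  have tendsto_x_mul_exp : Tendsto (fun x ↦ x * Real.exp (-β / x)) (𝓝[>] 0) (𝓝 0) :=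
    x_mul_exp.trans_tendsto
      ((exp_neg_div_isBigO_pow hβ 1).trans_tendsto (by simpa using tendsto_id))
  have K_diff : (fun x ↦ K (x, -β, x * Real.exp (-β / x)) - K (x, -β, 0)) =O[𝓝[>] 0]
      fun x ↦ x * Real.exp (-β / x) := by
    have tendsto_pair := (tendsto_id.prodMk_nhds ((tendsto_const_nhds (x := -β)).prodMk_nhds
      tendsto_x_mul_exp)).prodMk_nhds (tendsto_id.prodMk_nhds
        ((tendsto_const_nhds (x := -β)).prodMk_nhds (tendsto_const_nhds (x := (0 : ℝ)))))
    have lipschitz := (hK _ (zero_neg_zero_mem_ball hβ hβr)).hasStrictFDerivAt.isBigO_sub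
    refine (lipschitz.comp_tendsto tendsto_pair).trans (.of_bound 1 (.of_forall fun x ↦ ?_))
    simp [Prod.norm_def, mul_nonneg, Real.exp_nonneg]
  have transform_bdd : (fun x ↦ expTransform φ (x, 0)) =O[𝓝[>] 0] fun _ ↦ (1 : ℝ) := by
    obtain ⟨C, hC⟩ := hφ.exists_bound
    exact .of_bound C (.of_forall fun x ↦ by simpa using abs_expTransform_le hC (x, 0))
  have remainder : (fun x ↦ x * Real.exp (-β / x) * expTransform φ (x, 0)) =O[𝓝[>] 0]
      fun x ↦ x * Real.exp (-β / x) := by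
    simpa using (isBigO_refl (fun x ↦ x * Real.exp (-β / x)) _).mul transform_bdd
  refine ((K_diff.sub remainder).trans x_mul_exp).congr' ?_ .rfl
  filter_upwards [self_mem_nhdsWithin, eventually_eq_comp_osgoodMap_neg_div
    (fun p ↦ analyticAt_fst.mul (hJ p)) hK heq hβ hβr] with x (x_pos : 0 < x) factor
  rw [osgoodMap_neg_div x_pos.ne', Pi.mul_apply, hφ.expPrimitive_eq,
    mul_div_cancel₀ _ x_pos.ne'] at factor
  linear_combination -factor

lemma HasBoundedDerivs.mul_expTransform_sub_sum_isBigO (hφ : HasBoundedDerivs φ) (b : ℝ) (N : ℕ) :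
    (fun x ↦ x * expTransform φ (x, b) -
      ∑ n ∈ Finset.range N, iteratedDeriv n φ b * x ^ (n + 1)) =O[𝓝[>] 0] (· ^ (N + 1)) := by
  obtain ⟨C, hC⟩ := hφ.2 N
  refine .of_bound C (.of_forall fun x ↦ ?_)
  have remainder : x * expTransform φ (x, b) -
      ∑ n ∈ Finset.range N, iteratedDeriv n φ b * x ^ (n + 1) =
      expTransform (iteratedDeriv N φ) (x, b) * x ^ (N + 1) := by
    simp only [hφ.expTransform_eq_sum_add x b N, pow_succ, ← mul_assoc, ← Finset.sum_mul]
    ring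
  rw [remainder, norm_mul]
  gcongr
  exact abs_expTransform_le hC _

lemma exists_geometric_bound_iteratedDeriv_of_eq_comp_osgoodMap (hφ : HasBoundedDerivs φ)
    (hJ : ∀ p, AnalyticAt ℝ (expPrimitive φ) p) (hK : AnalyticAt ℝ K 0)
    (heq : ∀ᶠ p in 𝓝 0, p.1 * expPrimitive φ p = K (osgoodMap p)) :
    ∃ b C R, ∀ n, |iteratedDeriv n φ b| ≤ C * R ^ n := by
  obtain ⟨r, r_pos, hKr⟩ := hK.exists_ball_analyticOnNhd
  obtain ⟨β, hβ, hβr⟩ := exists_between r_pos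
  have analytic_boundary : AnalyticAt ℝ (fun x ↦ -K (x, -β, 0)) 0 :=
    ((hKr _ (zero_neg_zero_mem_ball hβ hβr)).comp_of_eq
      (analyticAt_id.prod analyticAt_const) rfl).neg
  let a : ℕ → ℝ
    | 0 => 0
    | n + 1 => iteratedDeriv n φ (-β)
  have expansion (N : ℕ) : (fun x ↦ -K (x, -β, 0) - ∑ n ∈ Finset.range N, a n * x ^ n)
      =O[𝓝[>] 0] (· ^ N) := by
    cases N with
    | zero =>
      simpa using (analytic_boundary.continuousAt.tendsto.isBigO_one ℝ).mono nhdsWithin_le_nhds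
    | succ N =>
      have flat := (sub_mul_expTransform_isBigO_exp hφ hJ hKr heq hβ hβr).trans
        (exp_neg_div_isBigO_pow hβ (N + 1))
      refine (flat.add (hφ.mul_expTransform_sub_sum_isBigO (-β) N)).congr_left fun x ↦ ?_
      simp only [Finset.sum_range_succ', a, zero_mul, add_zero]
      ring
  obtain ⟨C, R, bound⟩ := exists_geometric_bound_of_analyticAt analytic_boundary expansion
  refine ⟨-β, C * R, R, fun n ↦ (bound (n + 1)).trans_eq ?_⟩
  ring

end AnalyticFactorization

section SmoothFactorization

/-- A function `H` on `ℝ³` with `x J(x, y) = H(osgoodMap (x, y))` for `J = expPrimitive φ`. -/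
noncomputable def osgoodExtension (φ : ℝ → ℝ) (q : ℝ × ℝ × ℝ) : ℝ :=
  q.2.2 * expTransform φ (q.1, 0) - q.1 * expTransform φ (q.1, q.2.1)

variable {φ : ℝ → ℝ}

lemma HasBoundedDerivs.contDiff_osgoodExtension (hφ : HasBoundedDerivs φ) :
    ContDiff ℝ ∞ (osgoodExtension φ) := by
  have := hφ.contDiff_expTransform
  unfold osgoodExtension
  fun_prop

lemma osgoodExtension_zero (φ : ℝ → ℝ) : osgoodExtension φ 0 = 0 := by simp [osgoodExtension]

lemma HasBoundedDerivs.osgoodExtension_osgoodMap (hφ : HasBoundedDerivs φ) (p : ℝ × ℝ) :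
    osgoodExtension φ (osgoodMap p) = p.1 * expPrimitive φ p := by
  rw [hφ.expPrimitive_eq p.1 p.2]
  simp only [osgoodExtension, osgoodMap]
  ring

end SmoothFactorization

section Shear

variable {E : Type*} [NormedAddCommGroup E] [NormedSpace ℝ E]

/-- The shear `(z, v) ↦ (z - H v, v)`, which flattens the graph of `H`. -/
def shear (H : E → ℝ) (q : ℝ × E) : ℝ × E := (q.1 - H q.2, q.2)

lemma contDiff_shear {H : E → ℝ} {n : ℕ∞ω} (hH : ContDiff ℝ n H) : ContDiff ℝ n (shear H) :=
  (contDiff_fst.sub (hH.comp contDiff_snd)).prodMk contDiff_snd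

lemma exists_hasFDerivAt_shear {H : E → ℝ} {v : E} (hH : DifferentiableAt ℝ H v) (z : ℝ) :
    ∃ D : (ℝ × E) ≃L[ℝ] ℝ × E, HasFDerivAt (shear H) (D : (ℝ × E) →L[ℝ] ℝ × E) (z, v) := by
  let swap := ContinuousLinearEquiv.prodComm ℝ ℝ E
  let shear_swap := ContinuousLinearEquiv.skewProd (.refl ℝ E) (.refl ℝ ℝ) (-fderiv ℝ H v)
  refine ⟨swap.trans (shear_swap.trans swap.symm), ?_⟩
  have hdiff : HasFDerivAt (shear H) _ (z, v) :=
    (hasFDerivAt_fst.sub (hH.hasFDerivAt.comp (z, v) hasFDerivAt_snd)).prodMk hasFDerivAt_snd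
  refine hdiff.congr_fderiv ?_
  ext <;> simp [swap, shear_swap]

end Shear

section ImplicitFunction

lemma exists_analyticAt_implicit {E : Type*} [NormedAddCommGroup E] [NormedSpace ℝ E]
    [CompleteSpace E] {F : ℝ × E → ℝ} {u : ℝ × E} (hF : AnalyticAt ℝ F u)
    (hF' : fderiv ℝ F u (1, 0) ≠ 0) :
    ∃ K : E → ℝ, AnalyticAt ℝ K u.2 ∧ ∀ᶠ q in 𝓝 u, F q = F u → q.1 = K q.2 := by
  let swap := ContinuousLinearEquiv.prodComm ℝ E ℝ
  have hFs : ContDiffAt ℝ ω (F ∘ swap) u.swap := (hF.comp (swap.analyticAt u.swap)).contDiffAt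
  have partial_eq : fderiv ℝ (F ∘ swap) u.swap ∘L .inr ℝ E ℝ =
      (ContinuousLinearEquiv.unitsEquivAut ℝ (.mk0 _ hF') : ℝ →L[ℝ] ℝ) := by
    ext
    rw [swap.comp_right_fderiv]
    simp [swap]
  have invertible : (fderiv ℝ (F ∘ swap) u.swap ∘L .inr ℝ E ℝ).IsInvertible :=
    ⟨_, partial_eq.symm⟩
  refine ⟨hFs.implicitFunction (by simp) invertible,
    (hFs.contDiffAt_implicitFunction (by simp) invertible).analyticAt, ?_⟩
  have solve := hFs.eventually_apply_eq_iff_implicitFunction (by simp) invertible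
  filter_upwards [continuous_swap.continuousAt.eventually solve] with q hq hFq
  exact (hq.1 hFq).symm

lemma eq_zero_of_eventually_add_mul_add_mul_exp_eq_zero {a b c : ℝ}
    (h : ∀ᶠ y in 𝓝 0, a + b * y + c * Real.exp y = 0) : a = 0 ∧ b = 0 ∧ c = 0 := by
  have h₀ : (fun y ↦ a + b * y + c * Real.exp y) =ᶠ[𝓝 0] fun _ ↦ 0 := h
  have d₀ (y : ℝ) :
      HasDerivAt (fun y ↦ a + b * y + c * Real.exp y) (b + c * Real.exp y) y := by
    have affine : HasDerivAt (fun y ↦ a + b * y) b y := by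
      simpa using ((hasDerivAt_id y).const_mul b).const_add a
    exact affine.add (y.hasDerivAt_exp.const_mul c)
  have d₁ (y : ℝ) : HasDerivAt (fun y ↦ b + c * Real.exp y) (c * Real.exp y) y :=
    (y.hasDerivAt_exp.const_mul c).const_add b
  have h₁ : (fun y ↦ b + c * Real.exp y) =ᶠ[𝓝 0] fun _ ↦ 0 := by
    simpa [funext fun y ↦ (d₀ y).deriv] using h₀.deriv
  have h₂ : (fun y ↦ c * Real.exp y) =ᶠ[𝓝 0] fun _ ↦ 0 := by
    simpa [funext fun y ↦ (d₁ y).deriv] using h₁.deriv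
  have hc : c = 0 := by simpa using h₂.self_of_nhds
  have hb : b = 0 := by simpa [hc] using h₁.self_of_nhds
  exact ⟨by simpa [hb, hc] using h₀.self_of_nhds, hb, hc⟩

lemma fderiv_fst_comp_ne_zero {E G : Type*} [NormedAddCommGroup E] [NormedSpace ℝ E]
    [NormedAddCommGroup G] [NormedSpace ℝ G] {π : E → ℝ × G} {Dπ : E ≃L[ℝ] ℝ × G} {u : E}
    (hDπ : HasFDerivAt π (Dπ : E →L[ℝ] ℝ × G) u) : fderiv ℝ (fun q ↦ (π q).1) u ≠ 0 := by
  rw [hDπ.fst.fderiv]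
  intro h
  simpa using DFunLike.congr_fun h (Dπ.symm (1, 0))

variable {J : ℝ × ℝ → ℝ} {F : ℝ × ℝ × ℝ × ℝ → ℝ}

lemma eventually_fderiv_apply_eq_zero_s16 (hJ : Differentiable ℝ J) (hF : DifferentiableAt ℝ F 0)
    (heq : ∀ᶠ p in 𝓝 0, F (p.1 * J p, osgoodMap p) = 0) :
    ∀ᶠ y in 𝓝 0, fderiv ℝ F 0 (J (0, y), 1, y, Real.exp y) = 0 := by
  filter_upwards [(Continuous.prodMk_right (0 : ℝ)).continuousAt.eventually heq.eventually_nhds]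
    with y eq_near_axis
  have eq_on_line : ∀ᶠ x in 𝓝 0, F (x * J (x, y), x, x * y, x * Real.exp y) = 0 :=
    (Continuous.prodMk_left y).continuousAt.eventually eq_near_axis
  have line : HasDerivAt (fun x ↦ (x * J (x, y), x, x * y, x * Real.exp y))
      (J (0, y), 1, y, Real.exp y) 0 := by
    have hJy : DifferentiableAt ℝ (fun x ↦ J (x, y)) 0 := by fun_prop
    simpa using ((hasDerivAt_id 0).mul hJy.hasDerivAt).prodMk ((hasDerivAt_id 0).prodMk
      (((hasDerivAt_id 0).mul_const y).prodMk ((hasDerivAt_id 0).mul_const (Real.exp y))))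
  have chain := hF.hasFDerivAt.comp_hasDerivAt_of_eq 0 line (by simp [Prod.ext_iff])
  exact chain.unique ((hasDerivAt_const 0 0).congr_of_eventuallyEq eq_on_line)

lemma fderiv_apply_one_zero_ne_zero (hJ : Differentiable ℝ J) (hF : DifferentiableAt ℝ F 0)
    (hF' : fderiv ℝ F 0 ≠ 0) (heq : ∀ᶠ p in 𝓝 0, F (p.1 * J p, osgoodMap p) = 0) :
    fderiv ℝ F 0 (1, 0) ≠ 0 := by
  intro h₁
  have h := eventually_fderiv_apply_eq_zero_s16 hJ hF heq
  generalize fderiv ℝ F 0 = L at *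
  have decomp (w x y z : ℝ) : L (w, x, y, z) =
      w * L (1, 0) + x * L (0, 1, 0) + y * L (0, 0, 1, 0) + z * L (0, 0, 0, 1) := by
    simp only [← smul_eq_mul, ← map_smul, ← map_add]
    simp
  obtain ⟨h₂, h₃, h₄⟩ : L (0, 1, 0) = 0 ∧ L (0, 0, 1, 0) = 0 ∧ L (0, 0, 0, 1) = 0 :=
    eq_zero_of_eventually_add_mul_add_mul_exp_eq_zero <| h.mono fun y hy ↦ by
      linear_combination hy - decomp (J (0, y)) 1 y (Real.exp y) - J (0, y) * h₁
  exact hF' (ContinuousLinearMap.ext fun v ↦ by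
    simp only [decomp v.1, h₁, h₂, h₃, h₄, mul_zero, add_zero, zero_apply])

lemma exists_analyticAt_eq_comp_osgoodMap (hJ : Differentiable ℝ J) (hF : AnalyticAt ℝ F 0)
    (hF' : fderiv ℝ F 0 ≠ 0) (heq : ∀ᶠ p in 𝓝 0, F (p.1 * J p, osgoodMap p) = 0) :
    ∃ K, AnalyticAt ℝ K 0 ∧ ∀ᶠ p in 𝓝 0, p.1 * J p = K (osgoodMap p) := by
  obtain ⟨K, hK, solve⟩ := exists_analyticAt_implicit hF
    (fderiv_apply_one_zero_ne_zero hJ hF.differentiableAt hF' heq)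
  have hF0 : F 0 = 0 := by
    have h := heq.self_of_nhds
    rwa [osgoodMap_zero, Prod.fst_zero, zero_mul] at h
  have tendsto_zero : Tendsto (fun p ↦ (p.1 * J p, osgoodMap p)) (𝓝 0) (𝓝 0) :=
    (continuous_fst.mul hJ.continuous).prodMk (continuous_iff_continuousAt.2 fun p ↦
      (analyticAt_osgoodMap p).continuousAt) |>.tendsto' _ _ (by simp [osgoodMap_zero])
  refine ⟨K, hK, ?_⟩
  filter_upwards [heq, tendsto_zero.eventually solve] with p hp hsolve
  exact hsolve (hp.trans hF0.symm)

end ImplicitFunction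

/-- There exist two real analytic map germs `f, g : (ℝ²,0) → (ℝ⁴,0)` which are `C^∞` R-L
equivalent but not analytically R-L equivalent. -/
theorem exists_smooth_RL_equiv_not_analytic_RL_equiv :
    ∃ f g : ℝ × ℝ → ℝ × ℝ × ℝ × ℝ,
      AnalyticAt ℝ f 0 ∧ f 0 = 0 ∧ AnalyticAt ℝ g 0 ∧ g 0 = 0 ∧
      (∃ (τ : ℝ × ℝ → ℝ × ℝ) (π : ℝ × ℝ × ℝ × ℝ → ℝ × ℝ × ℝ × ℝ),
        ContDiffAt ℝ (⊤ : ℕ∞) τ 0 ∧ τ 0 = 0 ∧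
        (∃ Dτ : (ℝ × ℝ) ≃L[ℝ] ℝ × ℝ,
          HasFDerivAt τ (Dτ : (ℝ × ℝ) →L[ℝ] ℝ × ℝ) 0) ∧
        ContDiffAt ℝ (⊤ : ℕ∞) π 0 ∧ π 0 = 0 ∧
        (∃ Dπ : (ℝ × ℝ × ℝ × ℝ) ≃L[ℝ] ℝ × ℝ × ℝ × ℝ,
          HasFDerivAt π (Dπ : (ℝ × ℝ × ℝ × ℝ) →L[ℝ] ℝ × ℝ × ℝ × ℝ) 0) ∧
        ∀ᶠ x : ℝ × ℝ in 𝓝 0, g (τ x) = π (f x)) ∧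
      ¬ (∃ (τ : ℝ × ℝ → ℝ × ℝ) (π : ℝ × ℝ × ℝ × ℝ → ℝ × ℝ × ℝ × ℝ),
        AnalyticAt ℝ τ 0 ∧ τ 0 = 0 ∧
        (∃ Dτ : (ℝ × ℝ) ≃L[ℝ] ℝ × ℝ,
          HasFDerivAt τ (Dτ : (ℝ × ℝ) →L[ℝ] ℝ × ℝ) 0) ∧
        AnalyticAt ℝ π 0 ∧ π 0 = 0 ∧
        (∃ Dπ : (ℝ × ℝ × ℝ × ℝ) ≃L[ℝ] ℝ × ℝ × ℝ × ℝ,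
          HasFDerivAt π (Dπ : (ℝ × ℝ × ℝ × ℝ) →L[ℝ] ℝ × ℝ × ℝ × ℝ) 0) ∧
        ∀ᶠ x : ℝ × ℝ in 𝓝 0, g (τ x) = π (f x)) := by
  have analytic_osgood := analyticAt_osgoodMap 0
  refine ⟨fun p ↦ (p.1 * expPrimitive lorentzian p, osgoodMap p), fun p ↦ (0, osgoodMap p),
    (analyticAt_fst.mul (analyticAt_expPrimitive_lorentzian 0)).prod analytic_osgood,
    by simp [osgoodMap_zero], analyticAt_const.prod analytic_osgood, by simp [osgoodMap_zero],
    ?smooth, ?not_analytic⟩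
  case smooth =>
    have smooth_ext := hasBoundedDerivs_lorentzian.contDiff_osgoodExtension
    refine ⟨id, shear (osgoodExtension lorentzian), contDiffAt_id, rfl,
      ⟨.refl ℝ _, hasFDerivAt_id 0⟩, (contDiff_shear smooth_ext).contDiffAt,
      by simp [shear, osgoodExtension_zero],
      exists_hasFDerivAt_shear (smooth_ext.differentiable (by simp) 0) 0, .of_forall fun p ↦ ?_⟩
    simp [shear, hasBoundedDerivs_lorentzian.osgoodExtension_osgoodMap]
  case not_analytic =>
    rintro ⟨τ, π, -, -, -, analytic_π, -, ⟨Dπ, hDπ⟩, conj⟩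
    obtain ⟨K, hK, factor⟩ := exists_analyticAt_eq_comp_osgoodMap
      (fun p ↦ (analyticAt_expPrimitive_lorentzian p).differentiableAt)
      (analyticAt_fst.comp analytic_π) (fderiv_fst_comp_ne_zero hDπ)
      (conj.mono fun p hp ↦ (congrArg Prod.fst hp).symm)
    obtain ⟨b, bound⟩ := exists_geometric_bound_iteratedDeriv_of_eq_comp_osgoodMap
      hasBoundedDerivs_lorentzian analyticAt_expPrimitive_lorentzian hK factor
    exact not_exists_iteratedDeriv_lorentzian_le b bound
end
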